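/- Assume α > 0, Assumption 2 holds, and ℓ is the exponential loss ℓ_exp or the logistic loss ℓ_log. Then any gradient flow of the empirical risk of a deep linear network satisfies lim_{t→∞} |⟨v_1(t), ū⟩| = 1 for any choice of top singular vector pair (u_1(t), v_1(t)) of W_1(t), and consequently lim_{t→∞} w_prod(t) / ∏_{k=1}^L ‖W_k(t)‖_F = ū. -/

import Mathlib

/-!
Write `w = wprod`, `R` for the risk, `W₁` for the first layer and `N = ‖W₁‖²` (Frobenius norm).

*The risk tends to zero.* The flow gives `R' = -‖∇R‖²`, and the first-layer gradient has squared
norm at least `‖w‖² ‖G‖² / N`, where `G` is the gradient of the risk with respect to `w`. Since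
`∇R(W(0)) ≠ 0`, the risk drops strictly below `ℓ 0`, which keeps `‖w‖` away from zero.
Separability gives `‖G‖ ≥ const · R`, and `N` grows at most linearly because `-ℓ'(x) x ≤ 1`.
Hence `(1/R)' ≥ const / (1 + t)`, so `1/R` grows at least logarithmically and `R → 0`
(`risk_tendsto_zero`). Consequently all margins `⟪w, zᵢ⟫` diverge, and so do the norms of all
layers (`margin_tendsto`, `frob_tendsto`).

*Alignment.* The imbalances `W_{k+1}ᵀ W_{k+1} - W_k W_kᵀ` are conserved. After normalizing each
layer by its Frobenius norm they vanish in the limit, so every limit point of the normalized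
layers (taken along an ultrafilter, by compactness) is an exactly balanced family, which has rank
one (`balanced_rank_one`). Thus there is a unit vector `p` with `w / ∏ ‖W_k‖ → p` and
`W₁ᵀ W₁ / N → p pᵀ` (`align_limit`).

*The limit direction is `ū`.* Let `E = N - ‖W₁ ū‖²` be the energy of the first layer orthogonal to
`ū`, and `q` the component of `w` orthogonal to `ū`. Then `E' = -2 ⟪q, G⟫`. If `‖q‖ ≥ 2n/α`, the
definition of `α` provides a support vector with `⟪q, zᵢ⟫ ≤ -α‖q‖`, whose contribution dominates
all the others, so `⟪q, G⟫ ≥ 0` (`perp_descent`). If `‖q‖` is shorter than `2n/α`, it is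
negligible against `‖w‖ → ∞`, and alignment makes `E` negligible against `N`
(`perpEnergy_small_of_short`). As `N` increases, a barrier argument for `E - ε N` gives
`E / N → 0` (`perpEnergy_small`). Therefore `⟪p, ū⟫² = 1`, and positivity of the margins excludes
`p = -ū` (`direction_limit`). Finally the top right singular vectors of `W₁` maximize the form of
`W₁ᵀ W₁ / N`, which converges to `ū ūᵀ`, so they converge to `±ū` (`top_singular_tendsto`).
-/

open Matrix Filter
open scoped BigOperators

noncomputable section

/-- Euclidean norm of a vector in `ℝ^m`. -/
def vecNorm {m : Type*} [Fintype m] (v : m → ℝ) : ℝ :=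
  Real.sqrt (∑ i, (v i) ^ 2)

/-- Frobenius norm of a real matrix. -/
def frobNorm {m n : Type*} [Fintype m] [Fintype n] (M : Matrix m n ℝ) : ℝ :=
  Real.sqrt (∑ i, ∑ j, (M i j) ^ 2)

/-- Spectral norm (operator 2-norm) of a real matrix. -/
def specNorm {m n : Type*} [Fintype m] [Fintype n] (M : Matrix m n ℝ) : ℝ :=
  sSup {c : ℝ | ∃ v : n → ℝ, vecNorm v = 1 ∧ c = vecNorm (M.mulVec v)}

/-- `(u, v)` is a top singular vector pair of `M`: both are unit vectors,
`M v = ‖M‖₂ u` and `Mᵀ u = ‖M‖₂ v`. -/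
def IsTopSingularPair {m n : Type*} [Fintype m] [Fintype n]
    (M : Matrix m n ℝ) (u : m → ℝ) (v : n → ℝ) : Prop :=
  vecNorm u = 1 ∧ vecNorm v = 1 ∧
    M.mulVec v = specNorm M • u ∧ Mᵀ.mulVec u = specNorm M • v

/-- Parameters of a deep linear network: layer `k` (0-indexed; paper layer `k+1`)
is a matrix mapping `ℝ^{dim k}` to `ℝ^{dim (k+1)}`. -/
abbrev Layers (dim : ℕ → ℕ) := ∀ j : ℕ, Matrix (Fin (dim (j+1))) (Fin (dim j)) ℝ

/-- Product `W_{j-1} ⋯ W_0` of the bottom `j` layers (paper: `W_j ⋯ W_1`). -/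
def prodUpTo {dim : ℕ → ℕ} (W : Layers dim) : ∀ j : ℕ, Matrix (Fin (dim j)) (Fin (dim 0)) ℝ
  | 0 => 1
  | (j+1) => W j * prodUpTo W j

/-- Product `W_{L-1} ⋯ W_j` of the layers from `j` up to the top layer `L-1`
(paper: `W_L ⋯ W_{j+1}`); for `j ≥ L` it is a pseudo-identity. -/
def prodFrom {dim : ℕ → ℕ} (L : ℕ) (W : Layers dim) (j : ℕ) :
    Matrix (Fin (dim L)) (Fin (dim j)) ℝ :=
  if h : j < L then prodFrom L W (j+1) * W j
  else Matrix.of fun i j' => if (i : ℕ) = (j' : ℕ) then 1 else 0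
  termination_by L - j
  decreasing_by omega

/-- The linear predictor `w_prod = (W_L ⋯ W_1)ᵀ ∈ ℝ^d` induced by the network
(recall `dim L = 1`). -/
def wprod {dim : ℕ → ℕ} (L : ℕ) (W : Layers dim) : Fin (dim 0) → ℝ :=
  fun j => ∑ a, prodUpTo W L a j

/-- Empirical risk of a linear predictor `w`: `R(w) = (1/n) ∑ᵢ ℓ(⟨w, zᵢ⟩)`. -/
def riskV {n d : ℕ} (ℓ : ℝ → ℝ) (z : Fin n → Fin d → ℝ) (w : Fin d → ℝ) : ℝ :=
  (n : ℝ)⁻¹ * ∑ i, ℓ (w ⬝ᵥ z i)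

/-- Gradient of the risk w.r.t. the linear predictor: `∇R(w) = (1/n) ∑ᵢ ℓ'(⟨w, zᵢ⟩) zᵢ`. -/
def gradRiskV {n d : ℕ} (ℓ' : ℝ → ℝ) (z : Fin n → Fin d → ℝ) (w : Fin d → ℝ) :
    Fin d → ℝ :=
  (n : ℝ)⁻¹ • ∑ i, ℓ' (w ⬝ᵥ z i) • z i

/-- The partial gradient of the empirical risk with respect to layer `k`:
`∂R/∂W_k = (W_L ⋯ W_{k+1})ᵀ ∇R(w_prod)ᵀ (W_{k-1} ⋯ W_1)ᵀ`. -/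
def gradLayer {dim : ℕ → ℕ} (L : ℕ) (ℓ' : ℝ → ℝ) {n : ℕ}
    (z : Fin n → Fin (dim 0) → ℝ) (W : Layers dim) (k : ℕ) :
    Matrix (Fin (dim (k+1))) (Fin (dim k)) ℝ :=
  (prodFrom L W (k+1))ᵀ *
    (Matrix.of fun (_ : Fin (dim L)) (j : Fin (dim 0)) => gradRiskV ℓ' z (wprod L W) j) *
    (prodUpTo W k)ᵀ

/-- Empirical risk of the network. -/
def riskW {dim : ℕ → ℕ} (L : ℕ) (ℓ : ℝ → ℝ) {n : ℕ}
    (z : Fin n → Fin (dim 0) → ℝ) (W : Layers dim) : ℝ :=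
  riskV ℓ z (wprod L W)

/-- Gradient flow: `dW(t)/dt = −∇R(W(t))` for all `t ≥ 0`, entrywise on each layer. -/
def IsGradientFlow {dim : ℕ → ℕ} (L : ℕ) (ℓ' : ℝ → ℝ) {n : ℕ}
    (z : Fin n → Fin (dim 0) → ℝ) (W : ℝ → Layers dim) : Prop :=
  ∀ t : ℝ, 0 ≤ t → ∀ k < L, ∀ i j,
    HasDerivAt (fun s => W s k i j) (-(gradLayer L ℓ' z (W t) k i j)) t

/-- The initialization-dependent constant `D`. -/
def Dconst {dim : ℕ → ℕ} (L : ℕ) (W0 : Layers dim) : ℝ :=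
  (⨆ k : Fin L, frobNorm (W0 k) ^ 2) - frobNorm (W0 (L-1)) ^ 2
    + ∑ k ∈ Finset.range (L-1),
        specNorm (W0 k * (W0 k)ᵀ - (W0 (k+1))ᵀ * W0 (k+1))

/-- Euclidean norm of a parameter tuple (all entries of the first `L` layers concatenated). -/
def paramNorm {dim : ℕ → ℕ} (L : ℕ) (V : Layers dim) : ℝ :=
  Real.sqrt (∑ k ∈ Finset.range L, frobNorm (V k) ^ 2)

/-- Squared Euclidean norm of the full gradient `∇R(W)`. -/
def gradNormSq {dim : ℕ → ℕ} (L : ℕ) (ℓ' : ℝ → ℝ) {n : ℕ}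
    (z : Fin n → Fin (dim 0) → ℝ) (W : Layers dim) : ℝ :=
  ∑ k ∈ Finset.range L, frobNorm (gradLayer L ℓ' z W k) ^ 2

/-- The data-dependent constant `α = min_{‖ξ‖=1, ξ ⟂ ū} max_{i ∈ S} ⟨ξ, zᵢ⟩`,
where `S` is the set of support vectors. -/
def alphaConst {n d : ℕ} (z : Fin n → Fin d → ℝ) (ubar : Fin d → ℝ) (γ : ℝ) : ℝ :=
  sInf {c : ℝ | ∃ ξ : Fin d → ℝ, vecNorm ξ = 1 ∧ ξ ⬝ᵥ ubar = 0 ∧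
    c = sSup {r : ℝ | ∃ i : Fin n, ubar ⬝ᵥ z i = γ ∧ r = ξ ⬝ᵥ z i}}

/-- Orthogonal projection onto the orthogonal complement of `span(ū)` (for `ū` a unit vector). -/
def projPerp {d : ℕ} (ubar : Fin d → ℝ) (w : Fin d → ℝ) : Fin d → ℝ :=
  w - (w ⬝ᵥ ubar) • ubar


/-! ### Linear algebra -/

theorem frobNorm_sq {m n : Type*} [Fintype m] [Fintype n] (M : Matrix m n ℝ) :
    frobNorm M ^ 2 = trace (Mᵀ * M) := by
  unfold frobNorm
  rw [Real.sq_sqrt (by positivity)]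
  simp only [trace, Matrix.diag, Matrix.mul_apply, Matrix.transpose_apply]
  rw [Finset.sum_comm]
  simp only [sq]

theorem trace_tmul_nonneg {m n : Type*} [Fintype m] [Fintype n] (M : Matrix m n ℝ) :
    0 ≤ trace (Mᵀ * M) := by
  rw [← frobNorm_sq]; positivity

theorem dot_sq_le {m : Type*} [Fintype m] (u v : m → ℝ) :
    (u ⬝ᵥ v) ^ 2 ≤ (u ⬝ᵥ u) * (v ⬝ᵥ v) := by
  have := Finset.sum_mul_sq_le_sq_mul_sq Finset.univ u v
  simpa [dotProduct, sq] using this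

theorem dot_self_nonneg' {m : Type*} [Fintype m] (u : m → ℝ) : 0 ≤ u ⬝ᵥ u :=
  Finset.sum_nonneg fun i _ => mul_self_nonneg (u i)

theorem vecNorm_sq {m : Type*} [Fintype m] (v : m → ℝ) : vecNorm v ^ 2 = v ⬝ᵥ v := by
  unfold vecNorm
  rw [Real.sq_sqrt (by positivity)]
  simp [dotProduct, sq]

theorem vecNorm_nonneg {m : Type*} [Fintype m] (v : m → ℝ) : 0 ≤ vecNorm v :=
  Real.sqrt_nonneg _

theorem frobNorm_nonneg {m n : Type*} [Fintype m] [Fintype n] (M : Matrix m n ℝ) :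
    0 ≤ frobNorm M :=
  Real.sqrt_nonneg _

/-- Submultiplicativity of the squared Frobenius norm. -/
theorem trace_mul_le {l m n : Type*} [Fintype l] [Fintype m] [Fintype n]
    (A : Matrix l m ℝ) (B : Matrix m n ℝ) :
    trace ((A * B)ᵀ * (A * B)) ≤ trace (Aᵀ * A) * trace (Bᵀ * B) := by
  have e2 : trace (Bᵀ * B) = ∑ j, ∑ k, (B k j) ^ 2 := by
    simp only [trace, Matrix.diag, Matrix.mul_apply, Matrix.transpose_apply, sq]
  have e1 : trace (Aᵀ * A) = ∑ i, ∑ k, (A i k) ^ 2 := by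
    rw [← frobNorm_sq, frobNorm, Real.sq_sqrt (by positivity)]
  have e3 : trace ((A * B)ᵀ * (A * B)) = ∑ i, ∑ j, ((A * B) i j) ^ 2 := by
    rw [← frobNorm_sq, frobNorm, Real.sq_sqrt (by positivity)]
  rw [e1, e2, e3, Finset.sum_mul_sum]
  refine Finset.sum_le_sum fun i _ => Finset.sum_le_sum fun j _ => ?_
  rw [Matrix.mul_apply]
  exact Finset.sum_mul_sq_le_sq_mul_sq Finset.univ (A i) (fun k => B k j)

theorem dot_mulVec_tmul {m n : Type*} [Fintype m] [Fintype n] (M : Matrix m n ℝ)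
    (v : n → ℝ) : v ⬝ᵥ (Mᵀ * M) *ᵥ v = (M *ᵥ v) ⬝ᵥ (M *ᵥ v) := by
  rw [← Matrix.mulVec_mulVec, Matrix.dotProduct_mulVec, Matrix.vecMul_transpose]

theorem mulVec_sq_le {m n : Type*} [Fintype m] [Fintype n] (M : Matrix m n ℝ)
    (v : n → ℝ) : (M *ᵥ v) ⬝ᵥ (M *ᵥ v) ≤ frobNorm M ^ 2 * (v ⬝ᵥ v) := by
  rw [frobNorm, Real.sq_sqrt (by positivity), Finset.sum_mul]
  refine Finset.sum_le_sum fun i _ => ?_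
  have := dot_sq_le (M i) v
  calc _ = (M i ⬝ᵥ v) ^ 2 := by rw [sq]; rfl
    _ ≤ _ := this
    _ = _ := by simp [dotProduct, sq]

/-- The set defining `specNorm M` is bounded by `frobNorm M`, so its supremum is genuine. -/
theorem mulVec_le_specNorm {m n : Type*} [Fintype m] [Fintype n] (M : Matrix m n ℝ)
    (v : n → ℝ) (hv : vecNorm v = 1) : vecNorm (M *ᵥ v) ≤ specNorm M := by
  refine le_csSup ⟨frobNorm M, ?_⟩ ⟨v, hv, rfl⟩
  rintro c ⟨u, hu, rfl⟩
  refine abs_le_of_sq_le_sq' ?_ (frobNorm_nonneg M) |>.2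
  rw [vecNorm_sq]
  have := mulVec_sq_le M u
  rwa [← vecNorm_sq u, hu, one_pow, mul_one] at this

/-! ### Products of layers -/

theorem prodFrom_succ {dim : ℕ → ℕ} (L : ℕ) (W : Layers dim) {j : ℕ} (h : j < L) :
    prodFrom L W j = prodFrom L W (j+1) * W j := by
  rw [prodFrom, dif_pos h]

theorem prodFrom_self {dim : ℕ → ℕ} (L : ℕ) (W : Layers dim) : prodFrom L W L = 1 := by
  rw [prodFrom, dif_neg (lt_irrefl L)]
  ext i j
  simp [Matrix.one_apply, Fin.ext_iff]

theorem prodFrom_mul_prodUpTo {dim : ℕ → ℕ} (L : ℕ) (W : Layers dim) {j : ℕ} (h : j ≤ L) :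
    prodFrom L W j * prodUpTo W j = prodUpTo W L := by
  induction h using Nat.decreasingInduction with
  | self => rw [prodFrom_self, Matrix.one_mul]
  | of_succ k hk ih => rw [prodFrom_succ L W hk, Matrix.mul_assoc]; exact ih

theorem prodUpTo_row {dim : ℕ → ℕ} {L : ℕ} (hdim : dim L = 1) (W : Layers dim)
    (a : Fin (dim L)) (j : Fin (dim 0)) : prodUpTo W L a j = wprod L W j := by
  have : Subsingleton (Fin (dim L)) := by rw [hdim]; infer_instance
  rw [wprod, Fintype.sum_subsingleton _ a]

theorem sum_top {dim : ℕ → ℕ} {L : ℕ} (hdim : dim L = 1) (c : ℝ) :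
    ∑ _a : Fin (dim L), c = c := by
  simp [hdim]

theorem prodUpTo_tmul {dim : ℕ → ℕ} {L : ℕ} (hdim : dim L = 1) (W : Layers dim) :
    (prodUpTo W L)ᵀ * prodUpTo W L = Matrix.of fun i j => wprod L W i * wprod L W j := by
  ext i j
  simp only [Matrix.mul_apply, Matrix.transpose_apply, prodUpTo_row hdim, Matrix.of_apply]
  exact sum_top hdim _

theorem wprod_dot_self {dim : ℕ → ℕ} {L : ℕ} (hdim : dim L = 1) (W : Layers dim) :
    wprod L W ⬝ᵥ wprod L W = trace ((prodUpTo W L)ᵀ * prodUpTo W L) := by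
  rw [prodUpTo_tmul hdim]; rfl

theorem prodUpTo_trace_le {dim : ℕ → ℕ} (W : Layers dim) (j : ℕ) :
    trace ((prodUpTo W j)ᵀ * prodUpTo W j)
      ≤ dim 0 * ∏ k ∈ Finset.range j, frobNorm (W k) ^ 2 := by
  induction j with
  | zero => simp [prodUpTo]
  | succ j ih =>
    rw [Finset.prod_range_succ, prodUpTo]
    refine (trace_mul_le _ _).trans ?_
    rw [← frobNorm_sq (W j)]
    calc _ ≤ frobNorm (W j) ^ 2 * _ := mul_le_mul_of_nonneg_left ih (by positivity)
      _ = _ := by ring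

theorem prodUpTo_smul {dim : ℕ → ℕ} (W : Layers dim) (c : ℕ → ℝ) (j : ℕ) :
    prodUpTo (fun k => c k • W k) j = (∏ k ∈ Finset.range j, c k) • prodUpTo W j := by
  induction j with
  | zero => simp [prodUpTo]
  | succ j ih =>
    rw [prodUpTo, ih, Finset.prod_range_succ, prodUpTo, Matrix.smul_mul, Matrix.mul_smul,
      smul_smul, mul_comm]

/-- Exactly balanced layers with a unit top row are all of rank one: with `C_j` the partial
product of the layers from `j` up, every `C_j` is a unit row and layer `j` is `C_{j+1}ᵀ C_j`. -/
theorem balanced_rank_one {dim : ℕ → ℕ} {L : ℕ} (M : Layers dim)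
    (htop : ∀ k, k + 1 = L → M k * (M k)ᵀ = 1)
    (hbal : ∀ k, k + 1 < L → (M (k+1))ᵀ * M (k+1) = M k * (M k)ᵀ) {j : ℕ} (hj : j ≤ L) :
    prodFrom L M j * (prodFrom L M j)ᵀ = 1 ∧
      (j < L → M j = (prodFrom L M (j+1))ᵀ * prodFrom L M j) := by
  induction hj using Nat.decreasingInduction with
  | self => simp [prodFrom_self]
  | of_succ k hk ih =>
    obtain ⟨h1, h2⟩ := ih
    have key : M k * (M k)ᵀ = (prodFrom L M (k+1))ᵀ * prodFrom L M (k+1) := by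
      rcases Nat.lt_or_ge (k+1) L with h | h
      · rw [← hbal k h]
        have h3 := h2 h
        have h4 : prodFrom L M (k+2) * (prodFrom L M (k+2))ᵀ * prodFrom L M (k+1)
            = prodFrom L M (k+1) := by
          have h5 := h1
          have : prodFrom L M (k+1) = prodFrom L M (k+2) * M (k+1) := prodFrom_succ L M h
          nth_rw 2 [this]
          rw [h3, ← Matrix.mul_assoc]
        rw [h3, Matrix.transpose_mul, Matrix.transpose_transpose, Matrix.mul_assoc,
          ← Matrix.mul_assoc (prodFrom L M (k+2)), h4]
      · have hkL : k + 1 = L := by omega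
        subst hkL
        rw [htop k rfl, prodFrom_self]; simp
    set c := prodFrom L M (k+1) with hc
    have hcM : prodFrom L M k = c * M k := prodFrom_succ L M hk
    refine ⟨?_, fun _ => ?_⟩
    · rw [hcM, Matrix.transpose_mul, Matrix.mul_assoc, ← Matrix.mul_assoc (M k), key,
        Matrix.mul_assoc, h1, Matrix.mul_one, h1]
    -- `cᵀ c` is the projection onto the row `c`, and `M k (M k)ᵀ = cᵀ c` forces `cᵀ c M k = M k`
    · have hE : (M k - cᵀ * (c * M k)) * (M k - cᵀ * (c * M k))ᵀ = 0 := by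
        have e1 : cᵀ * (c * M k) = (cᵀ * c) * M k := (Matrix.mul_assoc _ _ _).symm
        have e2 : (cᵀ * c) * (cᵀ * c) = cᵀ * c := by
          rw [Matrix.mul_assoc, ← Matrix.mul_assoc c, h1, Matrix.one_mul]
        have e3 : (M k - (cᵀ * c) * M k) = (1 - cᵀ * c) * M k := by
          rw [Matrix.sub_mul, Matrix.one_mul]
        rw [e1, e3, Matrix.transpose_mul, Matrix.mul_assoc, ← Matrix.mul_assoc (M k), key]
        rw [← Matrix.mul_assoc, Matrix.sub_mul, Matrix.one_mul, e2, sub_self, Matrix.zero_mul]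
      have := (Matrix.self_mul_conjTranspose_eq_zero (A := M k - cᵀ * (c * M k))).1 (by
        rw [Matrix.conjTranspose_eq_transpose_of_trivial]; exact hE)
      rw [hcM]
      exact sub_eq_zero.1 this

/-! ### Derivatives along the flow -/

/-- Entrywise derivative of a matrix-valued curve. -/
def MatDeriv {m n : Type*} (M : ℝ → Matrix m n ℝ) (M' : Matrix m n ℝ) (t : ℝ) : Prop :=
  ∀ i j, HasDerivAt (fun s => M s i j) (M' i j) t

theorem MatDeriv.mul {l m n : Type*} [Fintype m] {A : ℝ → Matrix l m ℝ}
    {B : ℝ → Matrix m n ℝ} {A' : Matrix l m ℝ} {B' : Matrix m n ℝ} {t : ℝ}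
    (hA : MatDeriv A A' t) (hB : MatDeriv B B' t) :
    MatDeriv (fun s => A s * B s) (A' * B t + A t * B') t := by
  intro i j
  simp only [Matrix.mul_apply, Matrix.add_apply, ← Finset.sum_add_distrib]
  exact HasDerivAt.fun_sum fun k _ => (hA i k).mul (hB k j)

theorem MatDeriv.transpose {m n : Type*} {A : ℝ → Matrix m n ℝ}
    {A' : Matrix m n ℝ} {t : ℝ} (hA : MatDeriv A A' t) :
    MatDeriv (fun s => (A s)ᵀ) A'ᵀ t := fun i j => hA j i

theorem MatDeriv.sub {m n : Type*} {A B : ℝ → Matrix m n ℝ}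
    {A' B' : Matrix m n ℝ} {t : ℝ} (hA : MatDeriv A A' t) (hB : MatDeriv B B' t) :
    MatDeriv (fun s => A s - B s) (A' - B') t := fun i j => (hA i j).sub (hB i j)

theorem eq_of_deriv_zero {f : ℝ → ℝ} (hf : ∀ t, 0 ≤ t → HasDerivAt f 0 t) {t : ℝ}
    (ht : 0 ≤ t) : f t = f 0 := by
  refine constant_of_has_deriv_right_zero (a := 0) (b := t) ?_ ?_ t ⟨ht, le_refl t⟩
  · exact fun x hx => (hf x hx.1).continuousAt.continuousWithinAt
  · exact fun x hx => (hf x hx.1).hasDerivWithinAt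

/-- The risk gradient as a `1 × d` row matrix. -/
def gradRow {dim : ℕ → ℕ} (L : ℕ) (ℓ' : ℝ → ℝ) {n : ℕ}
    (z : Fin n → Fin (dim 0) → ℝ) (W : Layers dim) : Matrix (Fin (dim L)) (Fin (dim 0)) ℝ :=
  Matrix.of fun _ j => gradRiskV ℓ' z (wprod L W) j

theorem gradLayer_eq {dim : ℕ → ℕ} (L : ℕ) (ℓ' : ℝ → ℝ) {n : ℕ}
    (z : Fin n → Fin (dim 0) → ℝ) (W : Layers dim) (k : ℕ) :
    gradLayer L ℓ' z W k
      = (prodFrom L W (k+1))ᵀ * gradRow L ℓ' z W * (prodUpTo W k)ᵀ := rfl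

theorem layer_deriv {dim : ℕ → ℕ} {L n : ℕ} {ℓ' : ℝ → ℝ} {z : Fin n → Fin (dim 0) → ℝ}
    {W : ℝ → Layers dim} (hflow : IsGradientFlow L ℓ' z W) {t : ℝ} (ht : 0 ≤ t) {k : ℕ}
    (hk : k < L) : MatDeriv (fun s => W s k) (-gradLayer L ℓ' z (W t) k) t :=
  fun i j => hflow t ht k hk i j

/-- Product rule for the partial products, multiplied from the left by the remaining layers so
that the derivatives of the individual layers appear in a single sum. -/
theorem prodUpTo_deriv {dim : ℕ → ℕ} {L n : ℕ} {ℓ' : ℝ → ℝ} {z : Fin n → Fin (dim 0) → ℝ}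
    {W : ℝ → Layers dim} (hflow : IsGradientFlow L ℓ' z W) {t : ℝ} (ht : 0 ≤ t) {j : ℕ}
    (hj : j ≤ L) : ∃ D, MatDeriv (fun s => prodUpTo (W s) j) D t ∧
      prodFrom L (W t) j * D = -∑ k ∈ Finset.range j,
        prodFrom L (W t) (k+1) * gradLayer L ℓ' z (W t) k * prodUpTo (W t) k := by
  induction j with
  | zero =>
    refine ⟨0, fun i j => ?_, by simp⟩
    simpa [prodUpTo] using hasDerivAt_const t _
  | succ j ih =>
    obtain ⟨D, hD, hD'⟩ := ih (by omega)
    refine ⟨_, (layer_deriv hflow ht (show j < L by omega)).mul hD, ?_⟩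
    rw [Finset.sum_range_succ, neg_add, ← hD', prodFrom_succ L (W t) (show j < L by omega),
      Matrix.mul_add, Matrix.neg_mul, Matrix.mul_neg, Matrix.mul_assoc, Matrix.mul_assoc]
    abel

/-- The flow dissipates the risk at the rate of the squared gradient norm. This is also the
consistency of `gradLayer` with the derivative of `riskW`. -/
theorem risk_deriv {dim : ℕ → ℕ} {L n : ℕ} {ℓ ℓ' : ℝ → ℝ}
    (hℓ : ∀ x, HasDerivAt ℓ (ℓ' x) x)
    {z : Fin n → Fin (dim 0) → ℝ}
    {W : ℝ → Layers dim} (hflow : IsGradientFlow L ℓ' z W) {t : ℝ} (ht : 0 ≤ t) :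
    HasDerivAt (fun s => riskW L ℓ z (W s)) (-gradNormSq L ℓ' z (W t)) t := by
  obtain ⟨D, hD, hD'⟩ := prodUpTo_deriv hflow ht le_rfl
  rw [prodFrom_self, Matrix.one_mul] at hD'
  set w' : Fin (dim 0) → ℝ := fun j => ∑ a, D a j with hw'
  have hw : ∀ j, HasDerivAt (fun s => wprod L (W s) j) (w' j) t := fun j =>
    HasDerivAt.fun_sum fun a _ => hD a j
  have h1 : ∀ i, HasDerivAt (fun s => wprod L (W s) ⬝ᵥ z i) (w' ⬝ᵥ z i) t := fun i =>
    HasDerivAt.fun_sum fun j _ => (hw j).mul_const _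
  have h2 : HasDerivAt (fun s => riskW L ℓ z (W s))
      ((n : ℝ)⁻¹ * ∑ i, ℓ' (wprod L (W t) ⬝ᵥ z i) * (w' ⬝ᵥ z i)) t :=
    (HasDerivAt.fun_sum fun i _ => (hℓ _).comp t (h1 i)).const_mul _
  convert h2 using 1
  have h3 : (n : ℝ)⁻¹ * ∑ i, ℓ' (wprod L (W t) ⬝ᵥ z i) * (w' ⬝ᵥ z i)
      = w' ⬝ᵥ gradRiskV ℓ' z (wprod L (W t)) := by
    rw [gradRiskV, dotProduct_smul, dotProduct_sum, smul_eq_mul]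
    simp only [dotProduct_smul, smul_eq_mul]
  have h4 : w' ⬝ᵥ gradRiskV ℓ' z (wprod L (W t)) = trace ((gradRow L ℓ' z (W t))ᵀ * D) := by
    simp only [trace, Matrix.diag, Matrix.mul_apply, Matrix.transpose_apply, gradRow,
      Matrix.of_apply, dotProduct, hw', Finset.sum_mul]
    exact Finset.sum_congr rfl fun _ _ => Finset.sum_congr rfl fun _ _ => mul_comm _ _
  rw [h3, h4, hD', Matrix.mul_neg, trace_neg, Matrix.mul_sum, trace_sum, gradNormSq]
  congr 1
  refine Finset.sum_congr rfl fun k _ => ?_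
  rw [frobNorm_sq]
  nth_rw 1 [gradLayer_eq]
  rw [Matrix.transpose_mul, Matrix.transpose_mul, Matrix.transpose_transpose,
    Matrix.transpose_transpose, Matrix.mul_assoc, trace_mul_comm]
  simp only [Matrix.mul_assoc]

/-- The algebraic identity behind the conservation of the imbalance. -/
theorem gradLayer_mul_transpose {dim : ℕ → ℕ} (L : ℕ) (ℓ' : ℝ → ℝ) {n : ℕ}
    (z : Fin n → Fin (dim 0) → ℝ) (W : Layers dim) {k : ℕ} (hk : k + 1 < L) :
    gradLayer L ℓ' z W k * (W k)ᵀ = (W (k+1))ᵀ * gradLayer L ℓ' z W (k+1) := by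
  rw [gradLayer_eq, gradLayer_eq, prodFrom_succ L W hk]
  simp only [prodUpTo, Matrix.transpose_mul, Matrix.mul_assoc]

/-- The imbalance of two adjacent layers is conserved by the flow. -/
theorem balance_const {dim : ℕ → ℕ} {L n : ℕ} {ℓ' : ℝ → ℝ}
    {z : Fin n → Fin (dim 0) → ℝ}
    {W : ℝ → Layers dim} (hflow : IsGradientFlow L ℓ' z W) {t : ℝ} (ht : 0 ≤ t) {k : ℕ}
    (hk : k + 1 < L) :
    (W t (k+1))ᵀ * W t (k+1) - W t k * (W t k)ᵀ
      = (W 0 (k+1))ᵀ * W 0 (k+1) - W 0 k * (W 0 k)ᵀ := by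
  ext i j
  refine eq_of_deriv_zero (f := fun t => ((W t (k+1))ᵀ * W t (k+1) - W t k * (W t k)ᵀ) i j)
    (fun s hs => ?_) ht
  have a := layer_deriv hflow hs hk
  have b := layer_deriv hflow hs (show k < L by omega)
  have c := (a.transpose.mul a).sub (b.mul b.transpose)
  have d := c i j
  convert d using 1
  have e := gradLayer_mul_transpose L ℓ' z (W s) hk
  have e' := congrArg Matrix.transpose e
  rw [Matrix.transpose_mul, Matrix.transpose_mul, Matrix.transpose_transpose,
    Matrix.transpose_transpose] at e'
  rw [Matrix.transpose_neg, Matrix.neg_mul, Matrix.mul_neg, Matrix.transpose_neg,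
    Matrix.neg_mul, Matrix.mul_neg, e, e']
  simp only [Matrix.sub_apply, Matrix.add_apply, Matrix.neg_apply]
  ring

/-- Squared Frobenius norms of any two layers differ by a constant along the flow. -/
theorem frob_const {dim : ℕ → ℕ} {L n : ℕ} {ℓ' : ℝ → ℝ}
    {z : Fin n → Fin (dim 0) → ℝ}
    {W : ℝ → Layers dim} (hflow : IsGradientFlow L ℓ' z W) {t : ℝ} (ht : 0 ≤ t) {k : ℕ}
    (hk : k < L) :
    frobNorm (W t k) ^ 2 = frobNorm (W t 0) ^ 2
      + (frobNorm (W 0 k) ^ 2 - frobNorm (W 0 0) ^ 2) := by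
  induction k with
  | zero => ring
  | succ k ih =>
    have h := congrArg trace (balance_const hflow ht hk)
    rw [trace_sub, trace_sub, ← frobNorm_sq, ← frobNorm_sq, trace_mul_comm (W t k),
      trace_mul_comm (W 0 k), ← frobNorm_sq, ← frobNorm_sq] at h
    have := ih (by omega)
    linarith

/-- Evolution of the Gram matrix of the first layer: it only involves `wprod` and the risk
gradient with respect to `wprod`. -/
theorem gram_deriv {dim : ℕ → ℕ} {L n : ℕ} (hL : 1 ≤ L) (hdim : dim L = 1) {ℓ' : ℝ → ℝ}
    {z : Fin n → Fin (dim 0) → ℝ}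
    {W : ℝ → Layers dim} (hflow : IsGradientFlow L ℓ' z W) {t : ℝ} (ht : 0 ≤ t)
    (i j : Fin (dim 0)) :
    HasDerivAt (fun s => ((W s 0)ᵀ * W s 0) i j)
      (-(gradRiskV ℓ' z (wprod L (W t)) i * wprod L (W t) j
        + wprod L (W t) i * gradRiskV ℓ' z (wprod L (W t)) j)) t := by
  have a := layer_deriv hflow ht (show 0 < L by omega)
  have d := (a.transpose.mul a) i j
  convert d using 1
  have hP : prodFrom L (W t) 1 * W t 0 = prodUpTo (W t) L := by
    rw [← prodFrom_mul_prodUpTo L (W t) hL]; simp [prodUpTo]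
  have h1 : (gradLayer L ℓ' z (W t) 0)ᵀ * W t 0
      = (gradRow L ℓ' z (W t))ᵀ * prodUpTo (W t) L := by
    rw [gradLayer_eq]
    simp only [prodUpTo, Matrix.transpose_mul, Matrix.transpose_one, Matrix.mul_one,
      Matrix.transpose_transpose, Matrix.mul_assoc]
    rw [hP]
  have h2 : (W t 0)ᵀ * gradLayer L ℓ' z (W t) 0
      = (prodUpTo (W t) L)ᵀ * gradRow L ℓ' z (W t) := by
    have := congrArg Matrix.transpose h1
    simpa only [Matrix.transpose_mul, Matrix.transpose_transpose] using this
  rw [Matrix.transpose_neg, Matrix.neg_mul, Matrix.mul_neg, h1, h2, ← neg_add,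
    Matrix.neg_apply, Matrix.add_apply]
  simp only [Matrix.mul_apply, Matrix.transpose_apply, gradRow, Matrix.of_apply,
    prodUpTo_row hdim, sum_top hdim]

/-! ### The loss functions -/

/-- The features of the exponential and logistic losses on which the argument rests.
`lower` is a gradient-domination bound on sublevel sets, and `half`, `upper` express the
exponential tail of the derivative. By `gap`, a loss below `ℓ 0` forces a margin bounded away
from zero. -/
structure GoodLoss (ℓ ℓ' : ℝ → ℝ) : Prop where
  deriv : ∀ x, HasDerivAt ℓ (ℓ' x) x
  pos : ∀ x, 0 < ℓ x
  neg : ∀ x, ℓ' x < 0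
  mul_le : ∀ x, -ℓ' x * x ≤ 1
  lower : ∀ B, ∃ κ > 0, ∀ x, ℓ x ≤ B → κ * ℓ x ≤ -ℓ' x
  half : ∀ x, 0 ≤ x → Real.exp (-x) / 2 ≤ -ℓ' x
  upper : ∀ x, -ℓ' x ≤ Real.exp (-x)
  gap : ∀ x, ℓ x < ℓ 0 → ℓ 0 - ℓ x ≤ x

theorem exp_neg_mul_le (x : ℝ) : Real.exp (-x) * x ≤ 1 := by
  rw [Real.exp_neg, inv_mul_le_iff₀ (Real.exp_pos x)]
  linarith [Real.add_one_le_exp x]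

theorem goodLoss_exp : GoodLoss (fun s => Real.exp (-s)) (fun s => -Real.exp (-s)) where
  deriv x := by simpa using (hasDerivAt_neg x).exp
  pos x := Real.exp_pos _
  neg x := by simpa using Real.exp_pos (-x)
  mul_le x := by simpa using exp_neg_mul_le x
  lower B := ⟨1, one_pos, fun x _ => by simp⟩
  half x _ := by have := Real.exp_pos (-x); simp only [neg_neg]; linarith
  upper x := by simp
  gap x _ := by have := Real.add_one_le_exp (-x); simp only [neg_zero, Real.exp_zero]; linarith

theorem goodLoss_log : GoodLoss (fun s => Real.log (1 + Real.exp (-s)))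
    (fun s => -Real.exp (-s) / (1 + Real.exp (-s))) where
  deriv x := by
    have h : HasDerivAt (fun s : ℝ => Real.exp (-s)) (-Real.exp (-x)) x := by
      simpa using (hasDerivAt_neg x).exp
    exact (h.const_add 1).log (by positivity)
  pos x := Real.log_pos (by linarith [Real.exp_pos (-x)])
  neg x := by
    have := Real.exp_pos (-x)
    exact div_neg_of_neg_of_pos (by linarith) (by linarith)
  mul_le x := by
    have h := Real.exp_pos (-x)
    have := exp_neg_mul_le x
    rw [neg_div, neg_neg, div_mul_eq_mul_div, div_le_one (by linarith)]
    linarith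
  lower B := by
    refine ⟨(Real.exp B)⁻¹, by positivity, fun x hx => ?_⟩
    have h := Real.exp_pos (-x)
    have h1 : 1 + Real.exp (-x) ≤ Real.exp B :=
      (Real.log_le_iff_le_exp (by positivity)).1 hx
    have h2 := Real.log_le_sub_one_of_pos (show 0 < 1 + Real.exp (-x) by positivity)
    have h3 := Real.log_nonneg (show 1 ≤ 1 + Real.exp (-x) by linarith)
    rw [neg_div, neg_neg, inv_mul_eq_div]
    have := Real.exp_pos B
    gcongr
    linarith
  half x hx := by
    have h := Real.exp_pos (-x)
    have h1 : Real.exp (-x) ≤ 1 := Real.exp_le_one_iff.2 (by linarith)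
    rw [neg_div, neg_neg]
    gcongr
    linarith
  upper x := by
    have h := Real.exp_pos (-x)
    rw [neg_div, neg_neg]
    exact div_le_self h.le (by linarith)
  gap x _ := by
    have h := Real.exp_pos (-x)
    have h0 := Real.exp_pos x
    by_cases hx : 0 ≤ x
    · have h1 : Real.exp (-(0:ℝ)) = 1 := by simp
      have h2 : 1 + Real.exp (-0) ≤ Real.exp x * (1 + Real.exp (-x)) := by
        rw [h1, mul_add, ← Real.exp_add]
        simp only [add_neg_cancel, Real.exp_zero]
        linarith [Real.one_le_exp hx]
      have := Real.log_le_log (by positivity) h2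
      rw [Real.log_mul h0.ne' (by positivity), Real.log_exp] at this
      linarith
    · rename_i hlt
      exfalso
      have h1 : Real.exp (-0) < Real.exp (-x) := Real.exp_lt_exp.2 (by linarith)
      have := Real.log_lt_log (show 0 < 1 + Real.exp (-0) by positivity)
        (show 1 + Real.exp (-0) < 1 + Real.exp (-x) by linarith)
      linarith

/-! ### The risk tends to zero -/

theorem mono_of_deriv {f f' : ℝ → ℝ} {a : ℝ} (hf : ∀ t, a ≤ t → HasDerivAt f (f' t) t)
    (hf' : ∀ t, a ≤ t → 0 ≤ f' t) : MonotoneOn f (Set.Ici a) := by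
  refine monotoneOn_of_deriv_nonneg (convex_Ici a)
    (fun t ht => (hf t ht).continuousAt.continuousWithinAt) ?_ ?_
  · rw [interior_Ici]
    exact fun t ht => (hf t (le_of_lt ht)).differentiableAt.differentiableWithinAt
  · rw [interior_Ici]
    intro t ht
    rw [(hf t (le_of_lt ht)).deriv]
    exact hf' t (le_of_lt ht)

theorem gradNormSq_nonneg {dim : ℕ → ℕ} (L : ℕ) (ℓ' : ℝ → ℝ) {n : ℕ}
    (z : Fin n → Fin (dim 0) → ℝ) (W : Layers dim) : 0 ≤ gradNormSq L ℓ' z W :=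
  Finset.sum_nonneg fun _ _ => sq_nonneg _

/-- The first-layer gradient alone gives a lower bound on the full gradient. -/
theorem gradNormSq_lower {dim : ℕ → ℕ} {L n : ℕ} (hL : 1 ≤ L) (hdim : dim L = 1) {ℓ' : ℝ → ℝ}
    (z : Fin n → Fin (dim 0) → ℝ) (W : Layers dim) :
    (wprod L W ⬝ᵥ wprod L W) * (gradRiskV ℓ' z (wprod L W) ⬝ᵥ gradRiskV ℓ' z (wprod L W))
      ≤ gradNormSq L ℓ' z W * frobNorm (W 0) ^ 2 := by
  set G := gradRiskV ℓ' z (wprod L W) with hG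
  set A := prodFrom L W 1 with hA
  have hs : Subsingleton (Fin (dim L)) := by rw [hdim]; infer_instance
  have a0 : Fin (dim L) := by rw [hdim]; exact 0
  have hP : A * W 0 = prodUpTo W L := by
    rw [← prodFrom_mul_prodUpTo L W hL]; simp [prodUpTo, hA]
  have h1 : wprod L W ⬝ᵥ wprod L W ≤ trace (Aᵀ * A) * frobNorm (W 0) ^ 2 := by
    rw [wprod_dot_self hdim, ← hP, frobNorm_sq]
    exact trace_mul_le _ _
  have h2 : trace (Aᵀ * A) * (G ⬝ᵥ G) = frobNorm (gradLayer L ℓ' z W 0) ^ 2 := by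
    have e : ∀ i j, gradLayer L ℓ' z W 0 i j = A a0 i * G j := by
      intro i j
      rw [gradLayer_eq]
      simp only [prodUpTo, Matrix.transpose_one, Matrix.mul_one]
      rw [Matrix.mul_apply, Fintype.sum_subsingleton _ a0]
      rfl
    rw [frobNorm, Real.sq_sqrt (by positivity)]
    simp only [e, trace, Matrix.diag, Matrix.mul_apply, Matrix.transpose_apply, dotProduct]
    rw [Finset.sum_mul_sum]
    refine Finset.sum_congr rfl fun i _ => Finset.sum_congr rfl fun j _ => ?_
    rw [Fintype.sum_subsingleton _ a0]
    ring
  have h3 : frobNorm (gradLayer L ℓ' z W 0) ^ 2 ≤ gradNormSq L ℓ' z W :=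
    Finset.single_le_sum (f := fun k => frobNorm (gradLayer L ℓ' z W k) ^ 2)
      (fun _ _ => sq_nonneg _) (Finset.mem_range.2 (by omega))
  have h4 := dot_self_nonneg' G
  calc _ ≤ trace (Aᵀ * A) * frobNorm (W 0) ^ 2 * (G ⬝ᵥ G) :=
        mul_le_mul_of_nonneg_right h1 h4
    _ = frobNorm (gradLayer L ℓ' z W 0) ^ 2 * frobNorm (W 0) ^ 2 := by rw [← h2]; ring
    _ ≤ _ := mul_le_mul_of_nonneg_right h3 (sq_nonneg _)

theorem dot_grad {n d : ℕ} (ℓ' : ℝ → ℝ) (z : Fin n → Fin d → ℝ) (w u : Fin d → ℝ) :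
    u ⬝ᵥ gradRiskV ℓ' z w = (n : ℝ)⁻¹ * ∑ i, ℓ' (w ⬝ᵥ z i) * (u ⬝ᵥ z i) := by
  rw [gradRiskV, dotProduct_smul, dotProduct_sum, smul_eq_mul]
  simp only [dotProduct_smul, smul_eq_mul]

theorem frob_deriv {dim : ℕ → ℕ} {L n : ℕ} (hL : 1 ≤ L) (hdim : dim L = 1) {ℓ' : ℝ → ℝ}
    {z : Fin n → Fin (dim 0) → ℝ}
    {W : ℝ → Layers dim} (hflow : IsGradientFlow L ℓ' z W) {t : ℝ} (ht : 0 ≤ t) :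
    HasDerivAt (fun s => frobNorm (W s 0) ^ 2)
      (-2 * (wprod L (W t) ⬝ᵥ gradRiskV ℓ' z (wprod L (W t)))) t := by
  have : (fun s => frobNorm (W s 0) ^ 2) = fun s => ∑ i, ((W s 0)ᵀ * W s 0) i i := by
    funext s; rw [frobNorm_sq]; rfl
  rw [this]
  refine (HasDerivAt.fun_sum fun i (_ : i ∈ Finset.univ) =>
    gram_deriv hL hdim hflow ht i i).congr_deriv ?_
  rw [dotProduct, Finset.mul_sum]
  exact Finset.sum_congr rfl fun i _ => by ring

/-- The first layer grows at most linearly since `-ℓ' x * x ≤ 1`. -/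
theorem frob_growth {dim : ℕ → ℕ} {L n : ℕ} (hL : 1 ≤ L) (hdim : dim L = 1) (hn : 0 < n)
    {ℓ ℓ' : ℝ → ℝ} (hℓ : GoodLoss ℓ ℓ')
    {z : Fin n → Fin (dim 0) → ℝ}
    {W : ℝ → Layers dim} (hflow : IsGradientFlow L ℓ' z W) {t : ℝ} (ht : 0 ≤ t) :
    frobNorm (W t 0) ^ 2 ≤ frobNorm (W 0 0) ^ 2 + 2 * t := by
  have h := mono_of_deriv (a := 0) (f := fun t => 2 * t - frobNorm (W t 0) ^ 2)
    (fun t ht => ((hasDerivAt_id t).const_mul 2).sub (frob_deriv hL hdim hflow ht)) (by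
      intro s hs
      rw [dot_grad]
      have hn' : (0:ℝ) < n := Nat.cast_pos.2 hn
      have h1 : -(n:ℝ) ≤ ∑ i, ℓ' (wprod L (W s) ⬝ᵥ z i) * (wprod L (W s) ⬝ᵥ z i) := by
        have : ∑ _i : Fin n, (-1:ℝ) ≤
            ∑ i, ℓ' (wprod L (W s) ⬝ᵥ z i) * (wprod L (W s) ⬝ᵥ z i) :=
          Finset.sum_le_sum fun i _ => by
            have := hℓ.mul_le (wprod L (W s) ⬝ᵥ z i)
            linarith
        simpa using this
      have h2 : (n:ℝ)⁻¹ * (-(n:ℝ)) ≤ (n:ℝ)⁻¹ *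
          ∑ i, ℓ' (wprod L (W s) ⬝ᵥ z i) * (wprod L (W s) ⬝ᵥ z i) :=
        mul_le_mul_of_nonneg_left h1 (by positivity)
      rw [mul_neg, inv_mul_cancel₀ hn'.ne'] at h2
      linarith)
  have := h (Set.mem_Ici.2 le_rfl) (Set.mem_Ici.2 ht) ht
  simp only at this
  linarith

theorem risk_antitone {dim : ℕ → ℕ} {L n : ℕ}
    {ℓ ℓ' : ℝ → ℝ} (hℓ : GoodLoss ℓ ℓ') {z : Fin n → Fin (dim 0) → ℝ}
    {W : ℝ → Layers dim} (hflow : IsGradientFlow L ℓ' z W) :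
    AntitoneOn (fun t => riskW L ℓ z (W t)) (Set.Ici 0) := by
  have h := mono_of_deriv (a := 0) (f := fun t => -riskW L ℓ z (W t))
    (fun t ht => (risk_deriv hℓ.deriv hflow ht).neg)
    (fun t _ => by rw [neg_neg]; exact gradNormSq_nonneg _ _ _ _)
  intro s hs t ht hst
  have := h hs ht hst
  simp only at this ⊢
  linarith

/-- After the start of the flow, `‖wprod‖` stays bounded away from zero, because the risk has
strictly dropped below its value `ℓ 0` at `wprod = 0`. -/
theorem wprod_lower {dim : ℕ → ℕ} {L n : ℕ} (hn : 0 < n)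
    {ℓ ℓ' : ℝ → ℝ} (hℓ : GoodLoss ℓ ℓ') {z : Fin n → Fin (dim 0) → ℝ}
    (hz : ∀ i, z i ⬝ᵥ z i ≤ 1)
    {W : ℝ → Layers dim} (hflow : IsGradientFlow L ℓ' z W)
    (hinit_grad : ∃ k < L, gradLayer L ℓ' z (W 0) k ≠ 0)
    (hinit_risk : riskW L ℓ z (W 0) ≤ ℓ 0) :
    ∃ t0 > 0, ∃ δ > 0, ∀ t, t0 ≤ t → δ ^ 2 ≤ wprod L (W t) ⬝ᵥ wprod L (W t) := by
  have hn' : (0:ℝ) < n := Nat.cast_pos.2 hn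
  have hS : 0 < gradNormSq L ℓ' z (W 0) := by
    obtain ⟨k, hk, hne⟩ := hinit_grad
    refine Finset.sum_pos' (fun _ _ => sq_nonneg _) ⟨k, Finset.mem_range.2 hk, ?_⟩
    rw [frobNorm_sq]
    refine lt_of_le_of_ne (trace_tmul_nonneg _) fun h => hne ?_
    rw [← Matrix.conjTranspose_eq_transpose_of_trivial] at h
    exact Matrix.trace_conjTranspose_mul_self_eq_zero_iff.1 h.symm
  obtain ⟨t0, ht0, hlt⟩ : ∃ t0 > 0, riskW L ℓ z (W t0) < riskW L ℓ z (W 0) := by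
    have h := hasDerivAt_iff_tendsto_slope.1 (risk_deriv (z := z) hℓ.deriv hflow le_rfl)
    have h2 := (h.eventually_lt_const (neg_lt_zero.2 hS)).filter_mono
      (nhdsGT_le_nhdsNE (0:ℝ))
    obtain ⟨t0, h3, h4⟩ := (h2.and self_mem_nhdsWithin).exists
    refine ⟨t0, h4, ?_⟩
    rw [slope_def_field, sub_zero, div_neg_iff] at h3
    rcases h3 with h3 | h3
    · exact absurd h3.2 (not_lt.2 (le_of_lt h4))
    · linarith [h3.1]
  refine ⟨t0, ht0, ℓ 0 - riskW L ℓ z (W t0), by linarith, fun t ht => ?_⟩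
  have hanti := risk_antitone (z := z) hℓ hflow (Set.mem_Ici.2 ht0.le)
    (Set.mem_Ici.2 (ht0.le.trans ht)) ht
  simp only at hanti
  obtain ⟨i, hi⟩ : ∃ i, ℓ (wprod L (W t) ⬝ᵥ z i) ≤ riskW L ℓ z (W t) := by
    by_contra! hcon
    have h : ∑ _i : Fin n, riskW L ℓ z (W t) < ∑ i, ℓ (wprod L (W t) ⬝ᵥ z i) :=
      Finset.sum_lt_sum_of_nonempty ⟨⟨0, hn⟩, Finset.mem_univ _⟩ fun i _ => hcon i
    have h2 : ∑ i, ℓ (wprod L (W t) ⬝ᵥ z i) = n * riskW L ℓ z (W t) := by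
      rw [riskW, riskV]; field_simp
    rw [h2] at h
    simp at h
  have hg := hℓ.gap _ (show ℓ (wprod L (W t) ⬝ᵥ z i) < ℓ 0 by linarith)
  have hcs := dot_sq_le (wprod L (W t)) (z i)
  have h0 := dot_self_nonneg' (wprod L (W t))
  have h1 := hz i
  have h2 : (ℓ 0 - riskW L ℓ z (W t0)) ^ 2 ≤ (wprod L (W t) ⬝ᵥ z i) ^ 2 :=
    pow_le_pow_left₀ (by linarith) (by linarith) 2
  nlinarith

/-- The risk vanishes in the limit: `d/dt (1/R)` is at least a constant over `‖W₁‖²`, while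
`‖W₁‖²` grows at most linearly, so that `1/R` grows at least logarithmically. -/
theorem risk_tendsto_zero {dim : ℕ → ℕ} {L n : ℕ} (hL : 1 ≤ L) (hdim : dim L = 1) (hn : 0 < n)
    {ℓ ℓ' : ℝ → ℝ} (hℓ : GoodLoss ℓ ℓ') {z : Fin n → Fin (dim 0) → ℝ}
    (hz : ∀ i, z i ⬝ᵥ z i ≤ 1) {γ : ℝ} (hγ : 0 < γ) {ubar : Fin (dim 0) → ℝ}
    (hu : ubar ⬝ᵥ ubar = 1) (hmargin : ∀ i, γ ≤ ubar ⬝ᵥ z i)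
    {W : ℝ → Layers dim} (hflow : IsGradientFlow L ℓ' z W)
    (hinit_grad : ∃ k < L, gradLayer L ℓ' z (W 0) k ≠ 0)
    (hinit_risk : riskW L ℓ z (W 0) ≤ ℓ 0) :
    Tendsto (fun t => riskW L ℓ z (W t)) atTop (nhds 0) := by
  have hn' : (0:ℝ) < n := Nat.cast_pos.2 hn
  obtain ⟨t0, ht0, δ, hδ, hw⟩ := wprod_lower hn hℓ hz hflow hinit_grad hinit_risk
  obtain ⟨κ, hκ, hlow⟩ := hℓ.lower (n * ℓ 0)
  have hrpos : ∀ t, 0 < riskW L ℓ z (W t) := fun t =>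
    mul_pos (by positivity) (Finset.sum_pos (fun i _ => hℓ.pos _) ⟨⟨0, hn⟩, Finset.mem_univ _⟩)
  set b := frobNorm (W 0 0) ^ 2 with hb
  have hb0 : 0 ≤ b := sq_nonneg _
  set c := δ ^ 2 * (γ * κ) ^ 2 with hc
  have hc0 : 0 < c := by positivity
  have hS : ∀ t, t0 ≤ t → c * riskW L ℓ z (W t) ^ 2 ≤ gradNormSq L ℓ' z (W t) * (b + 2 * t) := by
    intro t ht
    have ht' : 0 ≤ t := ht0.le.trans ht
    set w := wprod L (W t) with hwdef
    have hr0 : riskW L ℓ z (W t) ≤ ℓ 0 :=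
      (risk_antitone (z := z) hℓ hflow (Set.mem_Ici.2 le_rfl)
        (Set.mem_Ici.2 ht') ht').trans hinit_risk
    have hsum : ∑ i, ℓ (w ⬝ᵥ z i) = n * riskW L ℓ z (W t) := by
      rw [riskW, riskV, ← hwdef]; field_simp
    have hi : ∀ i, ℓ (w ⬝ᵥ z i) ≤ n * ℓ 0 := fun i => by
      have h1 := Finset.single_le_sum (f := fun i => ℓ (w ⬝ᵥ z i))
        (fun i _ => (hℓ.pos _).le) (Finset.mem_univ i)
      rw [hsum] at h1
      exact h1.trans (mul_le_mul_of_nonneg_left hr0 hn'.le)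
    have hgu : γ * κ * riskW L ℓ z (W t) ≤ -(ubar ⬝ᵥ gradRiskV ℓ' z w) := by
      rw [dot_grad, ← mul_neg, ← Finset.sum_neg_distrib]
      have h1 : ∑ i, γ * κ * ℓ (w ⬝ᵥ z i) ≤ ∑ i, -(ℓ' (w ⬝ᵥ z i) * (ubar ⬝ᵥ z i)) := by
        refine Finset.sum_le_sum fun i _ => ?_
        have h1 := hlow _ (hi i)
        have h2 := hmargin i
        have h3 := hℓ.pos (w ⬝ᵥ z i)
        have h4 := mul_le_mul h1 h2 hγ.le (by have := hℓ.neg (w ⬝ᵥ z i); linarith)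
        linarith
      rw [← Finset.mul_sum, hsum] at h1
      have h2 := mul_le_mul_of_nonneg_left h1 (inv_nonneg.2 hn'.le)
      calc _ = (n:ℝ)⁻¹ * (γ * κ * (n * riskW L ℓ z (W t))) := by field_simp
        _ ≤ _ := h2
    have hgg : (γ * κ * riskW L ℓ z (W t)) ^ 2 ≤ gradRiskV ℓ' z w ⬝ᵥ gradRiskV ℓ' z w := by
      have h1 := dot_sq_le ubar (gradRiskV ℓ' z w)
      rw [hu, one_mul] at h1
      have h2 := pow_le_pow_left₀ (by have := hrpos t; positivity) hgu 2
      rw [neg_sq] at h2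
      exact h2.trans h1
    have h5 := gradNormSq_lower (ℓ' := ℓ') hL hdim z (W t)
    have h6 := frob_growth hL hdim hn hℓ hflow ht'
    calc c * riskW L ℓ z (W t) ^ 2 = δ ^ 2 * (γ * κ * riskW L ℓ z (W t)) ^ 2 := by rw [hc]; ring
      _ ≤ (w ⬝ᵥ w) * (gradRiskV ℓ' z w ⬝ᵥ gradRiskV ℓ' z w) :=
        mul_le_mul (hw t ht) hgg (sq_nonneg _) (dot_self_nonneg' _)
      _ ≤ _ := h5
      _ ≤ _ := mul_le_mul_of_nonneg_left h6 (gradNormSq_nonneg _ _ _ _)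
  have hmono : MonotoneOn (fun t => (riskW L ℓ z (W t))⁻¹ - c / 2 * Real.log (b + 2 * t))
      (Set.Ici t0) := by
    refine mono_of_deriv (f' := fun t => -(-gradNormSq L ℓ' z (W t)) / riskW L ℓ z (W t) ^ 2
      - c / 2 * ((2 * 1) / (b + 2 * t))) (fun t ht => ?_) (fun t ht => ?_)
    · have hpos : 0 < b + 2 * t := by linarith
      exact ((risk_deriv hℓ.deriv hflow (ht0.le.trans ht)).inv (hrpos t).ne').sub
        (((((hasDerivAt_id t).const_mul 2).const_add b).log hpos.ne').const_mul _)
    · have hpos : 0 < b + 2 * t := by linarith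
      have h1 := hS t ht
      have h2 := hrpos t
      rw [neg_neg, sub_nonneg]
      calc c / 2 * ((2 * 1) / (b + 2 * t)) = c / (b + 2 * t) := by ring
        _ ≤ _ := by rw [div_le_div_iff₀ hpos (by positivity)]; exact h1
  have hinv : Tendsto (fun t => (riskW L ℓ z (W t))⁻¹) atTop atTop := by
    have hlog : Tendsto (fun t => c / 2 * Real.log (b + 2 * t)) atTop atTop := by
      refine Tendsto.const_mul_atTop (by positivity) (Real.tendsto_log_atTop.comp ?_)
      exact tendsto_atTop_add_const_left _ _ (tendsto_id.const_mul_atTop two_pos)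
    refine tendsto_atTop_mono' _ ?_ (tendsto_atTop_add_const_left _
      ((riskW L ℓ z (W t0))⁻¹ - c / 2 * Real.log (b + 2 * t0)) hlog)
    filter_upwards [eventually_ge_atTop t0] with t ht
    have := hmono (Set.mem_Ici.2 le_rfl) (Set.mem_Ici.2 ht) ht
    simp only at this
    linarith
  have := hinv.inv_tendsto_atTop
  refine this.congr fun t => ?_
  simp

theorem margin_tendsto {dim : ℕ → ℕ} {L n : ℕ} (hn : 0 < n)
    {ℓ ℓ' : ℝ → ℝ} (hℓ : GoodLoss ℓ ℓ') {z : Fin n → Fin (dim 0) → ℝ}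
    {W : ℝ → Layers dim}
    (hrisk : Tendsto (fun t => riskW L ℓ z (W t)) atTop (nhds 0)) (i : Fin n) :
    Tendsto (fun t => wprod L (W t) ⬝ᵥ z i) atTop atTop := by
  have hn' : (0:ℝ) < n := Nat.cast_pos.2 hn
  have hanti : StrictAnti ℓ := strictAnti_of_hasDerivAt_neg hℓ.deriv hℓ.neg
  refine tendsto_atTop.2 fun M => ?_
  have hp : 0 < (n:ℝ)⁻¹ * ℓ M := mul_pos (by positivity) (hℓ.pos M)
  filter_upwards [hrisk.eventually_lt_const hp] with t ht
  have h1 := Finset.single_le_sum (f := fun i => ℓ (wprod L (W t) ⬝ᵥ z i))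
    (fun i _ => (hℓ.pos _).le) (Finset.mem_univ i)
  have h2 : ∑ i, ℓ (wprod L (W t) ⬝ᵥ z i) < ℓ M := by
    rw [riskW, riskV] at ht
    exact lt_of_mul_lt_mul_left ht (by positivity)
  exact (hanti.lt_iff_gt.1 (h1.trans_lt h2)).le

/-- The first layer diverges: all layers have equal squared norms up to constants, so bounded
norms would bound `wprod`. -/
theorem frob_tendsto {dim : ℕ → ℕ} {L n : ℕ} (hdim : dim L = 1) (hn : 0 < n)
    {ℓ' : ℝ → ℝ} {z : Fin n → Fin (dim 0) → ℝ} (hz : ∀ i, z i ⬝ᵥ z i ≤ 1)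
    {W : ℝ → Layers dim} (hflow : IsGradientFlow L ℓ' z W)
    (hmar : ∀ i, Tendsto (fun t => wprod L (W t) ⬝ᵥ z i) atTop atTop) :
    Tendsto (fun t => frobNorm (W t 0) ^ 2) atTop atTop := by
  set C := ∑ k ∈ Finset.range L, |frobNorm (W 0 k) ^ 2 - frobNorm (W 0 0) ^ 2| with hC
  have hC0 : 0 ≤ C := Finset.sum_nonneg fun _ _ => abs_nonneg _
  refine tendsto_atTop.2 fun B => ?_
  set K : ℝ := dim 0 * (|B| + C) ^ L with hK
  have hK0 : 0 ≤ K := by positivity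
  filter_upwards [(hmar ⟨0, hn⟩).eventually_gt_atTop (K + 1), eventually_ge_atTop 0] with t ht ht0
  by_contra! hcon
  have h1 : wprod L (W t) ⬝ᵥ wprod L (W t) ≤ K := by
    rw [wprod_dot_self hdim]
    refine (prodUpTo_trace_le (W t) L).trans ?_
    refine mul_le_mul_of_nonneg_left ?_ (by positivity)
    calc _ ≤ ∏ k ∈ Finset.range L, (|B| + C) := by
          refine Finset.prod_le_prod (fun _ _ => sq_nonneg _) fun k hk => ?_
          rw [frob_const hflow ht0 (Finset.mem_range.1 hk)]
          have h2 := Finset.single_le_sum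
            (f := fun k => |frobNorm (W 0 k) ^ 2 - frobNorm (W 0 0) ^ 2|)
            (fun _ _ => abs_nonneg _) hk
          have h3 := le_abs_self (frobNorm (W 0 k) ^ 2 - frobNorm (W 0 0) ^ 2)
          have h4 := le_abs_self B
          linarith
      _ = _ := by simp
  have h2 := dot_sq_le (wprod L (W t)) (z ⟨0, hn⟩)
  have h3 := hz ⟨0, hn⟩
  have h4 := dot_self_nonneg' (wprod L (W t))
  nlinarith

/-! ### Asymptotic alignment of the layers -/

theorem frob_tendsto_layer {dim : ℕ → ℕ} {L n : ℕ}
    {ℓ' : ℝ → ℝ} {z : Fin n → Fin (dim 0) → ℝ}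
    {W : ℝ → Layers dim} (hflow : IsGradientFlow L ℓ' z W)
    (hN : Tendsto (fun t => frobNorm (W t 0) ^ 2) atTop atTop) {k : ℕ} (hk : k < L) :
    Tendsto (fun t => frobNorm (W t k) ^ 2) atTop atTop := by
  refine (tendsto_atTop_add_const_right atTop
    (frobNorm (W 0 k) ^ 2 - frobNorm (W 0 0) ^ 2) hN).congr' ?_
  filter_upwards [eventually_ge_atTop 0] with t ht
  exact (frob_const hflow ht hk).symm

theorem abs_entry_le {m n : Type*} [Fintype m] [Fintype n] (M : Matrix m n ℝ) (i : m) (j : n) :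
    |M i j| ≤ frobNorm M := by
  refine Real.abs_le_sqrt ?_
  exact (Finset.single_le_sum (f := fun j => M i j ^ 2) (fun _ _ => sq_nonneg _)
    (Finset.mem_univ j)).trans
    (Finset.single_le_sum (f := fun i => ∑ j, M i j ^ 2)
      (fun _ _ => Finset.sum_nonneg fun _ _ => sq_nonneg _) (Finset.mem_univ i))

theorem tendsto_mul_entry {ι l m n : Type*} [Fintype m] {F : Filter ι}
    {A : ι → Matrix l m ℝ} {B : ι → Matrix m n ℝ} {a : Matrix l m ℝ} {b : Matrix m n ℝ}
    (hA : ∀ i j, Tendsto (fun t => A t i j) F (nhds (a i j)))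
    (hB : ∀ i j, Tendsto (fun t => B t i j) F (nhds (b i j))) (i : l) (j : n) :
    Tendsto (fun t => (A t * B t) i j) F (nhds ((a * b) i j)) := by
  simp only [Matrix.mul_apply]
  exact tendsto_finsetSum _ fun k _ => (hA i k).mul (hB k j)

theorem tendsto_prodUpTo {ι : Type*} {dim : ℕ → ℕ} {F : Filter ι} {M : ι → Layers dim}
    {m : Layers dim} (h : ∀ k i j, Tendsto (fun t => M t k i j) F (nhds (m k i j))) (k : ℕ) :
    ∀ i j, Tendsto (fun t => prodUpTo (M t) k i j) F (nhds (prodUpTo m k i j)) := by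
  induction k with
  | zero => exact fun i j => tendsto_const_nhds
  | succ k ih => exact fun i j => tendsto_mul_entry (h k) ih i j

theorem smul_tmul_apply {m n : Type*} [Fintype m] (M : Matrix m n ℝ) (c : ℝ) (i j : n) :
    ((c⁻¹ • M)ᵀ * (c⁻¹ • M)) i j = (Mᵀ * M) i j / c ^ 2 := by
  rw [Matrix.transpose_smul, Matrix.smul_mul, Matrix.mul_smul, smul_smul, Matrix.smul_apply,
    smul_eq_mul, div_eq_inv_mul, sq, mul_inv]

/-- Along any ultrafilter at infinity the normalized layers converge by compactness; the limit
is exactly balanced since the conserved imbalance is negligible against the diverging norms, and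
hence of rank one. -/
theorem align_limit {dim : ℕ → ℕ} {L n : ℕ} (hL : 1 ≤ L) (hdim : dim L = 1)
    {ℓ' : ℝ → ℝ} {z : Fin n → Fin (dim 0) → ℝ}
    {W : ℝ → Layers dim} (hflow : IsGradientFlow L ℓ' z W)
    (hN : Tendsto (fun t => frobNorm (W t 0) ^ 2) atTop atTop)
    (U : Ultrafilter ℝ) (hU : (U : Filter ℝ) ≤ atTop) :
    ∃ p : Fin (dim 0) → ℝ, p ⬝ᵥ p = 1 ∧
      Tendsto (fun t => (∏ k ∈ Finset.range L, frobNorm (W t k))⁻¹ • wprod L (W t)) U (nhds p) ∧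
      ∀ i j, Tendsto (fun t => ((W t 0)ᵀ * W t 0) i j / frobNorm (W t 0) ^ 2) U
        (nhds (p i * p j)) := by
  set Mn : ℝ → Layers dim := fun t k => (frobNorm (W t k))⁻¹ • W t k with hMn
  have hex : ∀ k i j, ∃ x, Tendsto (fun t => Mn t k i j) U (nhds x) := by
    intro k i j
    obtain ⟨x, -, hx⟩ := (isCompact_Icc (a := (-1:ℝ)) (b := 1)).ultrafilter_le_nhds'
      (U.map fun t => Mn t k i j) (by
        refine Ultrafilter.mem_map.2 (Filter.univ_mem' fun t => ?_)
        rw [Set.mem_preimage, Set.mem_Icc, ← abs_le]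
        simp only [hMn, Matrix.smul_apply, smul_eq_mul]
        rw [abs_mul, abs_inv, abs_of_nonneg (frobNorm_nonneg _)]
        exact inv_mul_le_one_of_le₀ (abs_entry_le _ _ _) (frobNorm_nonneg _))
    exact ⟨x, hx⟩
  obtain ⟨m, hm⟩ : ∃ m : Layers dim, ∀ k i j, Tendsto (fun t => Mn t k i j) U (nhds (m k i j)) :=
    ⟨fun k i j => (hex k i j).choose, fun k i j => (hex k i j).choose_spec⟩
  have hinf : ∀ k < L, Tendsto (fun t => frobNorm (W t k) ^ 2) U atTop := fun k hk =>
    (frob_tendsto_layer hflow hN hk).mono_left hU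
  have htop : ∀ k, k + 1 = L → m k
      * (m k)ᵀ = 1 := by
    rintro k rfl
    have hs : Subsingleton (Fin (dim (k+1))) := by rw [hdim]; infer_instance
    ext a b
    obtain rfl : a = b := Subsingleton.elim _ _
    rw [Matrix.one_apply_eq]
    refine tendsto_nhds_unique_of_eventuallyEq
      (tendsto_mul_entry (F := (U : Filter ℝ)) (hm k) (B := fun t => (Mn t k)ᵀ)
        (b := (m k)ᵀ) (fun i j => hm k j i) a a) (tendsto_const_nhds (x := (1:ℝ))) ?_
    filter_upwards [(hinf k (by omega)).eventually_gt_atTop 0] with t ht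
    have h1 : frobNorm (W t k) ^ 2 = ∑ j, W t k a j ^ 2 := by
      rw [frobNorm, Real.sq_sqrt (by positivity), Fintype.sum_subsingleton _ a]
    simp only [Matrix.mul_apply, Matrix.transpose_apply, hMn, Matrix.smul_apply, smul_eq_mul]
    have h2 : ∀ j, (frobNorm (W t k))⁻¹ * W t k a j * ((frobNorm (W t k))⁻¹ * W t k a j)
        = (frobNorm (W t k) ^ 2)⁻¹ * W t k a j ^ 2 := fun j => by rw [← inv_pow]; ring
    simp only [h2]
    rw [← Finset.mul_sum, ← h1, inv_mul_cancel₀ ht.ne']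
  have hbal : ∀ k, k + 1 < L →
      (m (k+1))ᵀ * m (k+1)
        = m k * (m k)ᵀ := by
    intro k hk
    ext i j
    have h1 := tendsto_mul_entry (F := (U : Filter ℝ)) (hm k) (B := fun t => (Mn t k)ᵀ)
        (b := (m k)ᵀ) (fun i j => hm k j i) i j
    have h2 := tendsto_mul_entry (F := (U : Filter ℝ)) (A := fun t => (Mn t (k+1))ᵀ)
        (a := (m (k+1))ᵀ) (fun i j => hm (k+1) j i) (hm (k+1)) i j
    have hi1 := (hinf (k+1) hk).inv_tendsto_atTop
    have hi0 := (hinf k (by omega)).inv_tendsto_atTop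
    set C := ((W 0 (k+1))ᵀ * W 0 (k+1) - W 0 k * (W 0 k)ᵀ) i j with hC
    set c := frobNorm (W 0 (k+1)) ^ 2 - frobNorm (W 0 k) ^ 2 with hc
    have h3 := (h1.add (hi0.const_mul C)).mul ((hi1.const_mul c).const_sub 1)
    simp only [mul_zero, add_zero, sub_zero, mul_one] at h3
    refine tendsto_nhds_unique_of_eventuallyEq h2 h3 ?_
    filter_upwards [(hinf k (by omega)).eventually_gt_atTop 0,
      (hinf (k+1) hk).eventually_gt_atTop 0, hU (eventually_ge_atTop 0)] with t ht0 ht1 ht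
    have hb := congrFun (congrFun (balance_const hflow ht hk) i) j
    rw [← hC, Matrix.sub_apply] at hb
    have hf0 := frob_const hflow ht (show k < L by omega)
    have hf1 := frob_const hflow ht hk
    have hf : frobNorm (W t (k+1)) ^ 2 = frobNorm (W t k) ^ 2 + c := by rw [hc]; linarith
    simp only [hMn, Pi.inv_apply]
    rw [smul_tmul_apply, sub_eq_iff_eq_add.1 hb]
    have e : (((frobNorm (W t k))⁻¹ • W t k) * ((frobNorm (W t k))⁻¹ • W t k)ᵀ) i j
        = (W t k * (W t k)ᵀ) i j / frobNorm (W t k) ^ 2 := by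
      rw [Matrix.transpose_smul, Matrix.smul_mul, Matrix.mul_smul, smul_smul, Matrix.smul_apply,
        smul_eq_mul, div_eq_inv_mul, sq, mul_inv]
    rw [e]
    have hc' : c = frobNorm (W t (k+1)) ^ 2 - frobNorm (W t k) ^ 2 := by linarith
    rw [hc']
    have g0 : frobNorm (W t k) ≠ 0 := fun h => by simp [h] at ht0
    have g1 : frobNorm (W t (k+1)) ≠ 0 := fun h => by simp [h] at ht1
    field_simp
    ring
  have hrank := fun {j : ℕ} (h : j ≤ L) => balanced_rank_one (L := L) m htop hbal h
  have hC0 : prodFrom L m 0 = prodUpTo m L := by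
    rw [← prodFrom_mul_prodUpTo L m (Nat.zero_le L)]; simp [prodUpTo]
  refine ⟨wprod L m, ?_, ?_, fun i j => ?_⟩
  · rw [wprod_dot_self hdim, trace_mul_comm, ← hC0, (hrank (Nat.zero_le L)).1]
    simp [hdim]
  · have h : ∀ t, (∏ k ∈ Finset.range L, frobNorm (W t k))⁻¹ • wprod L (W t)
        = wprod L (Mn t) := by
      intro t
      funext j
      simp only [wprod, hMn, Pi.smul_apply]
      rw [prodUpTo_smul (W t) (fun k => (frobNorm (W t k))⁻¹), ← Finset.prod_inv_distrib,
        Finset.smul_sum]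
      rfl
    simp only [h]
    exact tendsto_pi_nhds.2 fun j => tendsto_finsetSum _ fun a _ => tendsto_prodUpTo hm L a j
  · have h1 : (m 0)ᵀ * m 0
        = Matrix.of fun i j => wprod L m i * wprod L m j := by
      rw [← prodUpTo_tmul hdim, ← hC0]
      have h2 := (hrank (Nat.zero_le L)).2 (by omega)
      have h3 := (hrank hL).1
      rw [h2, Matrix.transpose_mul, Matrix.transpose_transpose, Matrix.mul_assoc,
        ← Matrix.mul_assoc (prodFrom L m 1), h3, Matrix.one_mul]
    have h2 := tendsto_mul_entry (F := (U : Filter ℝ)) (A := fun t => (Mn t 0)ᵀ)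
        (a := (m 0)ᵀ) (fun i j => hm 0 j i) (hm 0) i j
    rw [h1] at h2
    refine h2.congr fun t => ?_
    simp only [hMn]
    exact smul_tmul_apply _ _ _ _

/-! ### Descent of the component orthogonal to the maximum-margin direction -/

/-- The infimum and suprema defining `alphaConst` are genuine once it is positive: every unit
vector orthogonal to `ubar` has inner product at least `alphaConst` with some support vector. -/
theorem alphaConst_le_exists {n d : ℕ} {z : Fin n → Fin d → ℝ} {ubar : Fin d → ℝ} {γ : ℝ}
    (hα : 0 < alphaConst z ubar γ) {ξ : Fin d → ℝ} (h1 : vecNorm ξ = 1) (h2 : ξ ⬝ᵥ ubar = 0) :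
    ∃ i, ubar ⬝ᵥ z i = γ ∧ alphaConst z ubar γ ≤ ξ ⬝ᵥ z i := by
  have hb : BddBelow {c : ℝ | ∃ ξ : Fin d → ℝ, vecNorm ξ = 1 ∧ ξ ⬝ᵥ ubar = 0 ∧
      c = sSup {r : ℝ | ∃ i : Fin n, ubar ⬝ᵥ z i = γ ∧ r = ξ ⬝ᵥ z i}} := by
    by_contra hb
    -- an unbounded infimum would take the junk value zero
    rw [alphaConst, Real.sInf_of_not_bddBelow hb] at hα
    exact lt_irrefl _ hα
  have hle : alphaConst z ubar γ
      ≤ sSup {r : ℝ | ∃ i : Fin n, ubar ⬝ᵥ z i = γ ∧ r = ξ ⬝ᵥ z i} :=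
    csInf_le hb ⟨ξ, h1, h2, rfl⟩
  have hfin : {r : ℝ | ∃ i : Fin n, ubar ⬝ᵥ z i = γ ∧ r = ξ ⬝ᵥ z i}.Finite :=
    (Set.finite_range fun i => ξ ⬝ᵥ z i).subset fun r ⟨i, _, hr⟩ => ⟨i, hr.symm⟩
  rcases Set.eq_empty_or_nonempty
    {r : ℝ | ∃ i : Fin n, ubar ⬝ᵥ z i = γ ∧ r = ξ ⬝ᵥ z i} with he | hne
  · rw [he, Real.sSup_empty] at hle
    linarith
  · obtain ⟨i, hi, hr⟩ := hne.csSup_mem hfin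
    exact ⟨i, hi, hr ▸ hle⟩

theorem projPerp_dot {d : ℕ} {ubar : Fin d → ℝ} (w v : Fin d → ℝ) :
    projPerp ubar w ⬝ᵥ v = w ⬝ᵥ v - (w ⬝ᵥ ubar) * (ubar ⬝ᵥ v) := by
  rw [projPerp, sub_dotProduct, smul_dotProduct, smul_eq_mul]

theorem projPerp_dot_self {d : ℕ} {ubar : Fin d → ℝ} (hu : ubar ⬝ᵥ ubar = 1) (w : Fin d → ℝ) :
    projPerp ubar w ⬝ᵥ projPerp ubar w = w ⬝ᵥ w - (w ⬝ᵥ ubar) ^ 2 := by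
  rw [projPerp_dot, projPerp, dotProduct_sub, dotProduct_sub, dotProduct_smul, dotProduct_smul,
    hu, dotProduct_comm ubar w, smul_eq_mul, smul_eq_mul]
  ring

/-- If `w` classifies every point correctly and its component orthogonal to `ubar` is long, then
a gradient step on the risk shrinks that component. A single support vector on the wrong side of
the orthogonal component outweighs all other points. -/
theorem perp_descent {n d : ℕ} {ℓ ℓ' : ℝ → ℝ} (hℓ : GoodLoss ℓ ℓ') {z : Fin n → Fin d → ℝ}
    {ubar : Fin d → ℝ} {γ α : ℝ} (hn : 0 < n) (hγ : 0 < γ) (hα : 0 < α)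
    (hu : ubar ⬝ᵥ ubar = 1) (hm : ∀ i, γ ≤ ubar ⬝ᵥ z i)
    (hal : ∀ ξ : Fin d → ℝ, vecNorm ξ = 1 → ξ ⬝ᵥ ubar = 0 →
      ∃ i, ubar ⬝ᵥ z i = γ ∧ α ≤ ξ ⬝ᵥ z i)
    {w : Fin d → ℝ} (hw : ∀ i, 0 < w ⬝ᵥ z i) (hρ : 2 * n / α ≤ vecNorm (projPerp ubar w)) :
    0 ≤ projPerp ubar w ⬝ᵥ gradRiskV ℓ' z w := by
  set q := projPerp ubar w with hq
  set ρ := vecNorm q with hρd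
  set c := w ⬝ᵥ ubar with hc
  have hn' : (0:ℝ) < n := by exact_mod_cast hn
  have hρ0 : 0 < ρ := lt_of_lt_of_le (by positivity) hρ
  have hαρ : 2 * n ≤ α * ρ := by rw [div_le_iff₀ hα] at hρ; linarith
  have hw_eq : ∀ i, w ⬝ᵥ z i = c * (ubar ⬝ᵥ z i) + q ⬝ᵥ z i := fun i => by
    rw [hq, projPerp_dot]; ring
  obtain ⟨i0, hi0, hi1⟩ := hal (-(ρ⁻¹) • q)
    (by
      have h : vecNorm (-(ρ⁻¹) • q) ^ 2 = 1 := by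
        rw [vecNorm_sq, smul_dotProduct, dotProduct_smul, ← vecNorm_sq, smul_eq_mul, smul_eq_mul,
          ← hρd]
        field_simp
      nlinarith [vecNorm_nonneg (-(ρ⁻¹) • q)])
    (by rw [smul_dotProduct, hq, projPerp_dot, hu]; simp)
  have hs0 : q ⬝ᵥ z i0 ≤ -(α * ρ) := by
    rw [smul_dotProduct, smul_eq_mul] at hi1
    have := mul_le_mul_of_nonneg_right hi1 hρ0.le
    have h2 : -ρ⁻¹ * (q ⬝ᵥ z i0) * ρ = -(q ⬝ᵥ z i0) := by field_simp
    linarith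
  have hc0 : 0 ≤ c := by
    have h1 := hw i0
    rw [hw_eq, hi0] at h1
    have : 0 < c * γ := by nlinarith
    exact (pos_of_mul_pos_left this hγ.le).le
  set e := Real.exp (-(c * γ)) with he
  have he0 : 0 < e := Real.exp_pos _
  -- points on the right side of `q`: the factor `exp (-s)` from the tail absorbs `s = ⟪q, z i⟫`
  have hgen : ∀ i, -ℓ' (w ⬝ᵥ z i) * (q ⬝ᵥ z i) ≤ e := by
    intro i
    have hneg := hℓ.neg (w ⬝ᵥ z i)
    rcases le_or_gt (q ⬝ᵥ z i) 0 with h | h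
    · nlinarith
    · have h1 : -ℓ' (w ⬝ᵥ z i) ≤ e * Real.exp (-(q ⬝ᵥ z i)) := by
        refine (hℓ.upper _).trans ?_
        rw [he, ← Real.exp_add]
        refine Real.exp_le_exp.2 ?_
        rw [hw_eq]
        nlinarith [mul_le_mul_of_nonneg_left (hm i) hc0]
      have h2 := mul_le_mul_of_nonneg_right h1 h.le
      have h3 := mul_le_mul_of_nonneg_left (exp_neg_mul_le (q ⬝ᵥ z i)) he0.le
      linarith
  -- the chosen support vector contributes enough negative mass to cancel `n` copies of `e`
  have hspec : -ℓ' (w ⬝ᵥ z i0) * (q ⬝ᵥ z i0) ≤ -(e * n) := by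
    have h1 : e / 2 ≤ -ℓ' (w ⬝ᵥ z i0) := by
      refine le_trans ?_ (hℓ.half _ (hw i0).le)
      have : e ≤ Real.exp (-(w ⬝ᵥ z i0)) := by
        refine Real.exp_le_exp.2 ?_
        rw [hw_eq, hi0]
        nlinarith
      linarith
    have h2 : 2 * (n:ℝ) ≤ -(q ⬝ᵥ z i0) := by linarith
    have := mul_le_mul h1 h2 (by positivity) (by linarith)
    linarith
  have hsum : ∑ i, -ℓ' (w ⬝ᵥ z i) * (q ⬝ᵥ z i) ≤ 0 := by
    calc ∑ i, -ℓ' (w ⬝ᵥ z i) * (q ⬝ᵥ z i)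
        ≤ ∑ i, (e - if i = i0 then e * (1 + n) else 0) := by
          refine Finset.sum_le_sum fun i _ => ?_
          split_ifs with h
          · subst h; linarith
          · simpa using hgen i
      _ = -e := by simp [Finset.sum_sub_distrib]; ring
      _ ≤ 0 := by linarith
  rw [dot_grad]
  refine mul_nonneg (by positivity) ?_
  simp only [neg_mul, Finset.sum_neg_distrib] at hsum
  linarith

/-! ### The perpendicular energy of the first layer -/

/-- The squared Frobenius norm of `M` minus `‖M ubar‖²`: for a unit vector `ubar`, the part of
the energy of `M` carried by directions orthogonal to `ubar`. -/
def perpEnergy {m n : Type*} [Fintype m] [Fintype n] (ubar : n → ℝ) (M : Matrix m n ℝ) : ℝ :=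
  frobNorm M ^ 2 - ubar ⬝ᵥ (Mᵀ * M) *ᵥ ubar

theorem quad_expand {n : Type*} [Fintype n] (H : Matrix n n ℝ) (u v : n → ℝ) :
    u ⬝ᵥ H *ᵥ v = ∑ i, ∑ j, u i * (H i j * v j) := by
  simp [dotProduct, mulVec, Finset.mul_sum]

theorem dot_sq_expand {n : Type*} [Fintype n] (p u : n → ℝ) :
    (p ⬝ᵥ u) ^ 2 = ∑ i, ∑ j, u i * (p i * p j * u j) := by
  rw [sq, dotProduct, Finset.sum_mul_sum]
  exact Finset.sum_congr rfl fun i _ => Finset.sum_congr rfl fun j _ => by ring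

theorem quad_limit {m n : Type*} [Fintype m] [Fintype n] {M : ℝ → Matrix m n ℝ} {F : Filter ℝ}
    {p : n → ℝ} (u : n → ℝ)
    (h : ∀ i j, Tendsto (fun t => ((M t)ᵀ * M t) i j / frobNorm (M t) ^ 2) F (nhds (p i * p j))) :
    Tendsto (fun t => (u ⬝ᵥ ((M t)ᵀ * M t) *ᵥ u) / frobNorm (M t) ^ 2) F
      (nhds ((p ⬝ᵥ u) ^ 2)) := by
  rw [dot_sq_expand]
  have := tendsto_finsetSum Finset.univ fun i _ => tendsto_finsetSum Finset.univ fun j _ =>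
    ((h i j).mul_const (u j)).const_mul (u i)
  refine this.congr fun t => ?_
  rw [quad_expand, Finset.sum_div]
  refine Finset.sum_congr rfl fun i _ => ?_
  rw [Finset.sum_div]
  exact Finset.sum_congr rfl fun j _ => by ring

theorem perpEnergy_limit {m n : Type*} [Fintype m] [Fintype n] {M : ℝ → Matrix m n ℝ}
    {F : Filter ℝ} {p : n → ℝ} (u : n → ℝ) (hN : ∀ᶠ t in F, 0 < frobNorm (M t) ^ 2)
    (h : ∀ i j, Tendsto (fun t => ((M t)ᵀ * M t) i j / frobNorm (M t) ^ 2) F (nhds (p i * p j))) :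
    Tendsto (fun t => perpEnergy u (M t) / frobNorm (M t) ^ 2) F (nhds (1 - (p ⬝ᵥ u) ^ 2)) := by
  refine ((quad_limit u h).const_sub 1).congr' ?_
  filter_upwards [hN] with t ht
  rw [perpEnergy, sub_div, div_self ht.ne']

theorem perpEnergy_deriv {dim : ℕ → ℕ} {L n : ℕ} (hL : 1 ≤ L) (hdim : dim L = 1) {ℓ' : ℝ → ℝ}
    {z : Fin n → Fin (dim 0) → ℝ} {W : ℝ → Layers dim} (hflow : IsGradientFlow L ℓ' z W)
    (ubar : Fin (dim 0) → ℝ) {t : ℝ} (ht : 0 ≤ t) :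
    HasDerivAt (fun s => perpEnergy ubar (W s 0))
      (-2 * (projPerp ubar (wprod L (W t)) ⬝ᵥ gradRiskV ℓ' z (wprod L (W t)))) t := by
  have h1 := frob_deriv hL hdim hflow ht
  have h2 : HasDerivAt (fun s => ubar ⬝ᵥ ((W s 0)ᵀ * W s 0) *ᵥ ubar)
      (∑ i, ∑ j, ubar i * (-(gradRiskV ℓ' z (wprod L (W t)) i * wprod L (W t) j
        + wprod L (W t) i * gradRiskV ℓ' z (wprod L (W t)) j) * ubar j)) t := by
    simp only [quad_expand]
    exact HasDerivAt.fun_sum fun i _ => HasDerivAt.fun_sum fun j _ =>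
      ((gram_deriv hL hdim hflow ht i j).mul_const (ubar j)).const_mul (ubar i)
  refine (h1.sub h2).congr_deriv ?_
  have e : ∀ w G : Fin (dim 0) → ℝ, ∑ i, ∑ j, ubar i * (-(G i * w j + w i * G j) * ubar j)
      = -2 * ((w ⬝ᵥ ubar) * (ubar ⬝ᵥ G)) := by
    intro w G
    have : (w ⬝ᵥ ubar) * (ubar ⬝ᵥ G) = ∑ i, ∑ j, (w i * ubar i) * (ubar j * G j) := by
      rw [dotProduct, dotProduct, Finset.sum_mul_sum]
    have h' : (w ⬝ᵥ ubar) * (ubar ⬝ᵥ G) = ∑ i, ∑ j, (ubar i * G i) * (w j * ubar j) := by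
      rw [mul_comm, dotProduct, dotProduct, Finset.sum_mul_sum]
    rw [show -2 * ((w ⬝ᵥ ubar) * (ubar ⬝ᵥ G)) = -((w ⬝ᵥ ubar) * (ubar ⬝ᵥ G))
      - ((w ⬝ᵥ ubar) * (ubar ⬝ᵥ G)) by ring]
    nth_rewrite 1 [this]
    rw [h', ← Finset.sum_neg_distrib, ← Finset.sum_sub_distrib]
    refine Finset.sum_congr rfl fun i _ => ?_
    rw [← Finset.sum_neg_distrib, ← Finset.sum_sub_distrib]
    exact Finset.sum_congr rfl fun j _ => by ring
  rw [e, projPerp_dot]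
  ring

/-! ### Convergence in direction -/

/-- When the component of `wprod` orthogonal to `ubar` stays bounded it is negligible against
`wprod`, and the alignment of the first layer with `wprod` makes the perpendicular energy
negligible too. -/
theorem perpEnergy_small_of_short {dim : ℕ → ℕ} {L n : ℕ} (hL : 1 ≤ L) (hdim : dim L = 1)
    (hn : 0 < n) {ℓ' : ℝ → ℝ} {z : Fin n → Fin (dim 0) → ℝ} (hz : ∀ i, z i ⬝ᵥ z i ≤ 1)
    {ubar : Fin (dim 0) → ℝ} (hu : ubar ⬝ᵥ ubar = 1)
    {W : ℝ → Layers dim} (hflow : IsGradientFlow L ℓ' z W)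
    (hmar : ∀ i, Tendsto (fun t => wprod L (W t) ⬝ᵥ z i) atTop atTop)
    (hN : Tendsto (fun t => frobNorm (W t 0) ^ 2) atTop atTop) (C : ℝ) {ε : ℝ} (hε : 0 < ε) :
    ∀ᶠ t in atTop, vecNorm (projPerp ubar (wprod L (W t))) < C →
      perpEnergy ubar (W t 0) ≤ ε * frobNorm (W t 0) ^ 2 := by
  -- on each ultrafilter the condition eventually holds or eventually fails
  refine Filter.mem_iff_ultrafilter.2 fun U hU => ?_
  by_cases hs : ∀ᶠ t in (U : Filter ℝ), vecNorm (projPerp ubar (wprod L (W t))) < C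
  swap
  · filter_upwards [Ultrafilter.eventually_not.2 hs] with t ht h
    exact absurd h ht
  obtain ⟨p, hp, hv, hH⟩ := align_limit hL hdim hflow hN U hU
  have hww : Tendsto (fun t => wprod L (W t) ⬝ᵥ wprod L (W t)) U atTop := by
    refine tendsto_atTop_mono' _ ?_ ((hmar ⟨0, hn⟩).mono_left hU)
    filter_upwards [hU ((hmar ⟨0, hn⟩).eventually_ge_atTop 1)] with t ht
    have h1 := dot_sq_le (wprod L (W t)) (z ⟨0, hn⟩)
    have h2 := mul_le_mul_of_nonneg_left (hz ⟨0, hn⟩) (dot_self_nonneg' (wprod L (W t)))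
    nlinarith
  have hdot : ∀ {a b : ℝ → Fin (dim 0) → ℝ} {x y : Fin (dim 0) → ℝ},
      Tendsto a U (nhds x) → Tendsto b U (nhds y) →
      Tendsto (fun t => a t ⬝ᵥ b t) U (nhds (x ⬝ᵥ y)) := fun ha hb =>
    tendsto_finsetSum _ fun i _ => (tendsto_pi_nhds.1 ha i).mul (tendsto_pi_nhds.1 hb i)
  have h1 := (hdot hv hv).sub ((hdot hv (tendsto_const_nhds (x := ubar))).pow 2)
  have h2 := (hww.inv_tendsto_atTop.const_mul (C ^ 2)).mul (hdot hv hv)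
  have hle : p ⬝ᵥ p - (p ⬝ᵥ ubar) ^ 2 ≤ C ^ 2 * 0 * (p ⬝ᵥ p) := by
    refine le_of_tendsto_of_tendsto h1 h2 ?_
    filter_upwards [hs, hww.eventually_gt_atTop 0] with t ht hw
    set w := wprod L (W t)
    set a := (∏ k ∈ Finset.range L, frobNorm (W t k))⁻¹
    have h3 : projPerp ubar w ⬝ᵥ projPerp ubar w ≤ C ^ 2 := by
      rw [← vecNorm_sq]
      exact pow_le_pow_left₀ (vecNorm_nonneg _) ht.le 2
    rw [projPerp_dot_self hu] at h3
    simp only [smul_dotProduct, dotProduct_smul, smul_eq_mul, Pi.inv_apply]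
    have h4 : C ^ 2 * (w ⬝ᵥ w)⁻¹ * (a * (a * (w ⬝ᵥ w))) = a ^ 2 * C ^ 2 := by
      field_simp
    rw [h4]
    nlinarith [mul_le_mul_of_nonneg_left h3 (sq_nonneg a)]
  have hN' := hN.mono_left hU
  have hE := perpEnergy_limit ubar (hN'.eventually_gt_atTop 0) hH
  rw [hp] at hle
  filter_upwards [hE.eventually_lt_const (show 1 - (p ⬝ᵥ ubar) ^ 2 < ε by linarith),
    hN'.eventually_gt_atTop 0] with t ht hpos _
  exact ((div_lt_iff₀ hpos).1 ht).le

/-- The perpendicular energy is a vanishing fraction of the total energy of the first layer.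
While it exceeds a fixed fraction of the total, the orthogonal component of `wprod` is long, so
the perpendicular energy decreases whereas the total energy grows. -/
theorem perpEnergy_small {dim : ℕ → ℕ} {L n : ℕ} (hL : 1 ≤ L) (hdim : dim L = 1)
    (hn : 0 < n) {ℓ ℓ' : ℝ → ℝ} (hℓ : GoodLoss ℓ ℓ') {z : Fin n → Fin (dim 0) → ℝ}
    (hz : ∀ i, z i ⬝ᵥ z i ≤ 1) {ubar : Fin (dim 0) → ℝ} {γ : ℝ} (hγ : 0 < γ)
    (hu : ubar ⬝ᵥ ubar = 1) (hm : ∀ i, γ ≤ ubar ⬝ᵥ z i)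
    (hα : 0 < alphaConst z ubar γ)
    {W : ℝ → Layers dim} (hflow : IsGradientFlow L ℓ' z W)
    (hmar : ∀ i, Tendsto (fun t => wprod L (W t) ⬝ᵥ z i) atTop atTop)
    (hN : Tendsto (fun t => frobNorm (W t 0) ^ 2) atTop atTop) {ε : ℝ} (hε : 0 < ε) :
    ∀ᶠ t in atTop, perpEnergy ubar (W t 0) ≤ ε * frobNorm (W t 0) ^ 2 := by
  have hev := (perpEnergy_small_of_short hL hdim hn hz hu hflow hmar hN
      (2 * n / alphaConst z ubar γ) (half_pos hε)).and
    ((eventually_all.2 fun i => (hmar i).eventually_gt_atTop 0).and (eventually_ge_atTop 0))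
  obtain ⟨T, hT⟩ := eventually_atTop.1 hev
  set ψ : ℝ → ℝ := fun t => perpEnergy ubar (W t 0) - ε / 2 * frobNorm (W t 0) ^ 2 with hψ
  set ψ' : ℝ → ℝ := fun t =>
    -2 * (projPerp ubar (wprod L (W t)) ⬝ᵥ gradRiskV ℓ' z (wprod L (W t)))
      - ε / 2 * (-2 * (wprod L (W t) ⬝ᵥ gradRiskV ℓ' z (wprod L (W t)))) with hψ'
  have hder : ∀ t, T ≤ t → HasDerivAt ψ (ψ' t) t := fun t ht =>
    (perpEnergy_deriv hL hdim hflow ubar (hT t ht).2.2).sub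
      ((frob_deriv hL hdim hflow (hT t ht).2.2).const_mul (ε / 2))
  set K := max (ψ T) 0 + 1 with hK
  have hK0 : 0 < K := by positivity
  -- `ψ` cannot cross the positive level `K`, since it decreases wherever it equals `K`
  have hbound : ∀ t, T ≤ t → ψ t ≤ K := by
    intro b hb
    refine image_le_of_deriv_right_lt_deriv_boundary (f := ψ) (f' := ψ') (a := T) (b := b)
      (B := fun _ => K) (B' := fun _ => 0)
      (fun t ht => (hder t ht.1).continuousAt.continuousWithinAt)
      (fun t ht => (hder t ht.1).hasDerivWithinAt)
      ((le_max_left _ _).trans (by linarith)) (fun t => hasDerivAt_const t K) ?_ ⟨hb, le_rfl⟩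
    intro t ht hψK
    obtain ⟨h1, h2, -⟩ := hT t ht.1
    have hlong : 2 * n / alphaConst z ubar γ ≤ vecNorm (projPerp ubar (wprod L (W t))) := by
      by_contra! h
      have h3 := h1 h
      simp only [hψ] at hψK
      linarith
    have h3 := perp_descent hℓ hn hγ hα hu hm (fun ξ a b => alphaConst_le_exists hα a b) h2 hlong
    have h4 : wprod L (W t) ⬝ᵥ gradRiskV ℓ' z (wprod L (W t)) < 0 := by
      rw [dot_grad]
      have : Nonempty (Fin n) := ⟨⟨0, hn⟩⟩
      refine mul_neg_of_pos_of_neg (by positivity) ?_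
      exact Finset.sum_neg (fun i _ => mul_neg_of_neg_of_pos (hℓ.neg _) (h2 i))
        Finset.univ_nonempty
    simp only [hψ']
    nlinarith
  filter_upwards [hN.eventually_ge_atTop (2 * K / ε), eventually_ge_atTop T] with t h1 h2
  have h3 := hbound t h2
  rw [div_le_iff₀ hε] at h1
  simp only [hψ] at h3
  linarith

/-- Two unit vectors with `|⟪p, u⟫| = 1` are equal or opposite, and `z` rules out the latter. -/
theorem eq_of_dot_sq_ge {d : ℕ} {p u z : Fin d → ℝ} (hp : p ⬝ᵥ p = 1) (hu : u ⬝ᵥ u = 1)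
    (h : 1 ≤ (p ⬝ᵥ u) ^ 2) (hz : 0 ≤ p ⬝ᵥ z) (huz : 0 < u ⬝ᵥ z) : p = u := by
  have h1 := projPerp_dot_self hu p
  have h2 := dot_self_nonneg' (projPerp u p)
  have h3 : (p ⬝ᵥ u) ^ 2 = 1 := by linarith
  have h4 : projPerp u p = 0 := dotProduct_self_eq_zero.1 (by linarith)
  have h5 : p = (p ⬝ᵥ u) • u := sub_eq_zero.1 h4
  rw [sq] at h3
  rcases mul_self_eq_one_iff.1 h3 with h6 | h6
  · rw [h5, h6, one_smul]
  · rw [h5, h6, smul_dotProduct, smul_eq_mul] at hz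
    linarith

/-- The normalized predictor and first-layer Gram matrix converge, because every limit direction
`p` from `align_limit` is forced to be `ubar`. -/
theorem direction_limit {dim : ℕ → ℕ} {L n : ℕ} (hL : 1 ≤ L) (hdim : dim L = 1)
    (hn : 0 < n) {ℓ ℓ' : ℝ → ℝ} (hℓ : GoodLoss ℓ ℓ') {z : Fin n → Fin (dim 0) → ℝ}
    (hz : ∀ i, z i ⬝ᵥ z i ≤ 1) {ubar : Fin (dim 0) → ℝ} {γ : ℝ} (hγ : 0 < γ)
    (hu : ubar ⬝ᵥ ubar = 1) (hm : ∀ i, γ ≤ ubar ⬝ᵥ z i)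
    (hα : 0 < alphaConst z ubar γ)
    {W : ℝ → Layers dim} (hflow : IsGradientFlow L ℓ' z W)
    (hmar : ∀ i, Tendsto (fun t => wprod L (W t) ⬝ᵥ z i) atTop atTop)
    (hN : Tendsto (fun t => frobNorm (W t 0) ^ 2) atTop atTop) :
    Tendsto (fun t => (∏ k ∈ Finset.range L, frobNorm (W t k))⁻¹ • wprod L (W t)) atTop
      (nhds ubar) ∧
    ∀ i j, Tendsto (fun t => ((W t 0)ᵀ * W t 0) i j / frobNorm (W t 0) ^ 2) atTop
      (nhds (ubar i * ubar j)) := by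
  have key : ∀ U : Ultrafilter ℝ, (U : Filter ℝ) ≤ atTop →
      Tendsto (fun t => (∏ k ∈ Finset.range L, frobNorm (W t k))⁻¹ • wprod L (W t)) U
        (nhds ubar) ∧
      ∀ i j, Tendsto (fun t => ((W t 0)ᵀ * W t 0) i j / frobNorm (W t 0) ^ 2) U
        (nhds (ubar i * ubar j)) := by
    intro U hU
    obtain ⟨p, hp, hv, hH⟩ := align_limit hL hdim hflow hN U hU
    have hN' := (hN.eventually_gt_atTop 0).filter_mono hU
    have hE := perpEnergy_limit ubar hN' hH
    have h1 : 1 ≤ (p ⬝ᵥ ubar) ^ 2 := by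
      refine le_of_forall_pos_le_add fun ε hε => ?_
      have : 1 - (p ⬝ᵥ ubar) ^ 2 ≤ ε := by
        refine le_of_tendsto hE ?_
        filter_upwards [hN', hU (perpEnergy_small hL hdim hn hℓ hz hγ hu hm hα hflow hmar hN hε)]
          with t ht h
        exact (div_le_iff₀ ht).2 h
      linarith
    have h2 : 0 ≤ p ⬝ᵥ z ⟨0, hn⟩ := by
      have : Tendsto (fun t => ((∏ k ∈ Finset.range L, frobNorm (W t k))⁻¹ • wprod L (W t))
          ⬝ᵥ z ⟨0, hn⟩) U (nhds (p ⬝ᵥ z ⟨0, hn⟩)) :=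
        tendsto_finsetSum _ fun i _ => (tendsto_pi_nhds.1 hv i).mul_const _
      refine ge_of_tendsto this ?_
      filter_upwards [hU ((hmar ⟨0, hn⟩).eventually_gt_atTop 0)] with t ht
      rw [smul_dotProduct, smul_eq_mul]
      exact mul_nonneg (inv_nonneg.2 (Finset.prod_nonneg fun k _ => frobNorm_nonneg _)) ht.le
    obtain rfl := eq_of_dot_sq_ge hp hu h1 h2 (hγ.trans_le (hm ⟨0, hn⟩))
    exact ⟨hv, hH⟩
  exact ⟨tendsto_iff_ultrafilter _ _ _ |>.2 fun U hU => (key U hU).1,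
    fun i j => tendsto_iff_ultrafilter _ _ _ |>.2 fun U hU => (key U hU).2 i j⟩

/-- If the normalized Gram matrices of `M t` converge to the rank-one projection onto a unit
vector `u`, then the top right singular vectors of `M t` converge to `± u`. -/
theorem top_singular_tendsto {m d : Type*} [Fintype m] [Fintype d] {M : ℝ → Matrix m d ℝ}
    {u : d → ℝ} (hu : u ⬝ᵥ u = 1)
    (hN : Tendsto (fun t => frobNorm (M t) ^ 2) atTop atTop)
    (hH : ∀ i j, Tendsto (fun t => ((M t)ᵀ * M t) i j / frobNorm (M t) ^ 2) atTop
      (nhds (u i * u j)))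
    {u1 : ℝ → m → ℝ} {v1 : ℝ → d → ℝ}
    (hs : ∀ t : ℝ, 0 ≤ t → IsTopSingularPair (M t) (u1 t) (v1 t)) :
    Tendsto (fun t => |v1 t ⬝ᵥ u|) atTop (nhds 1) := by
  have hvu : vecNorm u = 1 := by
    have := vecNorm_sq u
    nlinarith [vecNorm_nonneg u]
  -- entrywise error of the Gram matrix, which bounds the error of the form at unit vectors
  set e : ℝ → ℝ := fun t =>
    ∑ i, ∑ j, |((M t)ᵀ * M t) i j / frobNorm (M t) ^ 2 - u i * u j| with he
  have he0 : Tendsto e atTop (nhds 0) := by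
    have : Tendsto e atTop (nhds (∑ i, ∑ j, |u i * u j - u i * u j|)) :=
      tendsto_finsetSum _ fun i _ => tendsto_finsetSum _ fun j _ =>
        ((hH i j).sub_const (u i * u j)).abs
    simpa using this
  have hq := quad_limit u hH
  rw [hu, one_pow] at hq
  have hlow := hq.sub he0
  rw [sub_zero] at hlow
  have hsq : Tendsto (fun t => (v1 t ⬝ᵥ u) ^ 2) atTop (nhds 1) := by
    refine tendsto_of_tendsto_of_tendsto_of_le_of_le' hlow tendsto_const_nhds ?_ ?_
    · filter_upwards [hN.eventually_gt_atTop 0, eventually_ge_atTop 0] with t hpos ht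
      obtain ⟨h1, h2, h3, h4⟩ := hs t ht
      have hσ0 : 0 ≤ specNorm (M t) :=
        (vecNorm_nonneg _).trans (mulVec_le_specNorm (M t) (v1 t) h2)
      -- a top right singular vector maximizes the Gram form over unit vectors
      have h5 : u ⬝ᵥ ((M t)ᵀ * M t) *ᵥ u ≤ v1 t ⬝ᵥ ((M t)ᵀ * M t) *ᵥ v1 t := by
        rw [dot_mulVec_tmul, dot_mulVec_tmul, h3, smul_dotProduct, dotProduct_smul,
          ← vecNorm_sq, ← vecNorm_sq, h1, smul_eq_mul, smul_eq_mul]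
        have := pow_le_pow_left₀ (vecNorm_nonneg _) (mulVec_le_specNorm (M t) u hvu) 2
        linarith
      have hv1 : ∀ i, |v1 t i| ≤ 1 := fun i => by
        have h6 : v1 t i ^ 2 ≤ ∑ i, v1 t i ^ 2 :=
          Finset.single_le_sum (f := fun i => v1 t i ^ 2) (fun i _ => sq_nonneg _)
            (Finset.mem_univ i)
        have h7 : ∑ i, v1 t i ^ 2 = 1 := by simpa [vecNorm] using h2
        exact (sq_le_one_iff_abs_le_one _).1 (by linarith)
      have h6 : (v1 t ⬝ᵥ ((M t)ᵀ * M t) *ᵥ v1 t) / frobNorm (M t) ^ 2 - (v1 t ⬝ᵥ u) ^ 2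
          ≤ e t := by
        rw [dotProduct_comm (v1 t) u, dot_sq_expand, quad_expand, Finset.sum_div,
          ← Finset.sum_sub_distrib]
        refine Finset.sum_le_sum fun i _ => ?_
        rw [Finset.sum_div, ← Finset.sum_sub_distrib]
        refine Finset.sum_le_sum fun j _ => ?_
        set D := ((M t)ᵀ * M t) i j / frobNorm (M t) ^ 2 - u i * u j with hD
        calc v1 t i * (((M t)ᵀ * M t) i j * v1 t j) / frobNorm (M t) ^ 2
              - v1 t i * (u i * u j * v1 t j)
            = v1 t i * v1 t j * D := by rw [hD]; ring
          _ ≤ |v1 t i * v1 t j * D| := le_abs_self _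
          _ = |v1 t i| * |v1 t j| * |D| := by rw [abs_mul, abs_mul]
          _ ≤ 1 * 1 * |D| := by gcongr <;> exact hv1 _
          _ = |D| := by ring
      have h7 := div_le_div_of_nonneg_right h5 hpos.le
      linarith
    · filter_upwards [eventually_ge_atTop 0] with t ht
      have := dot_sq_le (v1 t) u
      rwa [hu, ← vecNorm_sq, (hs t ht).2.1, one_pow, one_mul] at this
  simpa [Real.sqrt_sq_eq_abs] using hsq.sqrt

theorem stmt10
    (dim : ℕ → ℕ) (L n : ℕ) (hL : 1 ≤ L) (hdimL : dim L = 1) (hn : 0 < n)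
    (x : Fin n → Fin (dim 0) → ℝ) (y : Fin n → ℝ) (z : Fin n → Fin (dim 0) → ℝ)
    (hx : ∀ i, vecNorm (x i) ≤ 1) (hy : ∀ i, y i = 1 ∨ y i = -1)
    (hz : ∀ i, z i = y i • x i)
    (γ : ℝ) (hγ : 0 < γ) (ubar : Fin (dim 0) → ℝ) (hubar_unit : vecNorm ubar = 1)
    (hubar_margin : ∀ i, γ ≤ ubar ⬝ᵥ z i)
    (hubar_max : ∀ u' : Fin (dim 0) → ℝ, vecNorm u' = 1 → ∃ i, u' ⬝ᵥ z i ≤ γ)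
    (ℓ ℓ' : ℝ → ℝ)
    (hloss : ((ℓ = fun s : ℝ => Real.exp (-s)) ∧ (ℓ' = fun s : ℝ => -Real.exp (-s)))
      ∨ ((ℓ = fun s : ℝ => Real.log (1 + Real.exp (-s)))
          ∧ (ℓ' = fun s : ℝ => -Real.exp (-s) / (1 + Real.exp (-s)))))
    (W : ℝ → Layers dim) (hflow : IsGradientFlow L ℓ' z W)
    (hinit_grad : ∃ k < L, gradLayer L ℓ' z (W 0) k ≠ 0)
    (hinit_risk : riskW L ℓ z (W 0) ≤ ℓ 0)
    (halpha : 0 < alphaConst z ubar γ) :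
    (∀ (u1 : ℝ → Fin (dim 1) → ℝ) (v1 : ℝ → Fin (dim 0) → ℝ),
        (∀ t : ℝ, 0 ≤ t → IsTopSingularPair (W t 0) (u1 t) (v1 t)) →
        Tendsto (fun t : ℝ => |v1 t ⬝ᵥ ubar|) atTop (nhds 1))
    ∧ Tendsto (fun t : ℝ =>
        (∏ k ∈ Finset.range L, frobNorm (W t k))⁻¹ • wprod L (W t))
      atTop (nhds ubar) := by
  have hu : ubar ⬝ᵥ ubar = 1 := by rw [← vecNorm_sq, hubar_unit, one_pow]
  have hz1 : ∀ i, z i ⬝ᵥ z i ≤ 1 := fun i => by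
    have h1 : x i ⬝ᵥ x i ≤ 1 := by
      rw [← vecNorm_sq]
      exact pow_le_one₀ (vecNorm_nonneg _) (hx i)
    rcases hy i with h | h <;> simpa [hz i, h] using h1
  have hℓ : GoodLoss ℓ ℓ' := by
    rcases hloss with ⟨rfl, rfl⟩ | ⟨rfl, rfl⟩
    exacts [goodLoss_exp, goodLoss_log]
  have hrisk := risk_tendsto_zero hL hdimL hn hℓ hz1 hγ hu hubar_margin hflow hinit_grad hinit_risk
  have hmar := margin_tendsto hn hℓ hrisk
  have hN := frob_tendsto hdimL hn hz1 hflow hmar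
  have hlim := direction_limit hL hdimL hn hℓ hz1 hγ hu hubar_margin halpha hflow hmar hN
  exact ⟨fun u1 v1 hs => top_singular_tendsto hu hN hlim.2 hs, hlim.1⟩

end
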